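/- Vanishing of interior energy (Proposition 6.3): Assume 3 ≤ d ≤ 6, 1 + 4/(d−1) ≤ p < 1 + 4/(d−2), and a > −(d−2)²/4 + ((d−2)p − d)²/(4p²); set κ₀ = ((d+2)−(d−2)p)/(p+1). Let u be a finite-energy radial classical solution of (NLW_a) whose initial data (u₀,u₁) = (u(·,0), ∂ₜu(·,0)) satisfy ∫_{ℝ^d}(|x|^{κ₀} + 1)(|∇u₀|² + |u₁|² + |u₀|^{p+1})dx < ∞. Then for every constant c > 0, lim_{t→+∞} ∫_{|x| < t − c·t^{1−κ₀}} ( |∇u(x,t)|² + |u(x,t)|²/|x|² + |∂ₜu(x,t)|² + |u(x,t)|^{p+1} ) dx = 0. -/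

import Mathlib

/-!
Put `ν = (d - 2)/2`, `m = ν² + a > 0` and `α = ν (p - 1)`. For a radial solution `u`, the function
`g = r ^ ν u` solves, on the half plane `r > 0`,
`g_tt = g_rr + g_r / r - m g / r² - r ^ (-α) |g| ^ (p - 1) g`.
With `N = r ^ (1 - α) |g| ^ (p + 1) / (p + 1)`, its energy density is
`en = r (g_t² + g_r²) / 2 + m g² / (2 r) + N`, and `mo = r g_t g_r` satisfies `∂_t en = ∂_r mo` and
`|mo| ≤ en`. The total energy is finite and conserved (`Sol.finite_energy`), so no energy is
exchanged with infinity, and the local energy `P(r, t) = ∫_0^r en` satisfies `∂_t P = mo`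
(`FE.P_flux`); in particular nothing has to be known about `u` near `r = 0` beyond finite energy.

The decay comes from a Morawetz identity for incoming energy. There are a density `q ≥ 0`, controlled
by `en`, and a flux `x ≤ q` with
`r q_t - x - r x_r = -(en + mo) - (α + (p - 1)/2 - 2) N` (`morawetz_identity`),
and the last coefficient is nonnegative exactly because `(p - 1)(d - 1) ≥ 4`. Hence for a nonincreasing
weight `ψ ≥ 0` the functional `∫ r ψ(t + r) q dr` is nonincreasing in `t`, and it loses at least
`∫ ψ(t + r) (en + mo) dr` per unit of time. The loss pays for the growth of `∫ a(t - r) P(r, t) dr`,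
whose time derivative is `∫ a(t - r) (en + mo) dr`, whenever `a(t - r) ≤ K ψ(t + r)`
(`weighted_flux`; the truncations near `r = 0` produce an error that tends to zero by finiteness of
the energy).

Take `ψ(y) = (1 + y) ^ (κ - 1)` with `κ = κ₀ ∈ (0, 1)` and let `M(t)` be the resulting functional. It
is nonincreasing and nonnegative, and `M(0) ≤ ∫ r ^ κ q(r, 0) dr` is finite by a Hardy inequality
applied to the weighted data (`Profile.weighted_bound`). So `M` has a limit at infinity. Choosing
for `a` a cut-off to `t - r ≥ s`, for which `K = (1 + 2t) ^ (1 - κ)` is admissible, gives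
`(s / 2) P(t - 2s, t) ≤ (1 + 2t) ^ (1 - κ) (M(s) - M(t))` (`FE.M_est` after removing truncations).
With `s = c t ^ (1 - κ) / 2` the powers of `t` cancel and `M(s) - M(t) → 0`, so
`P(t - c t ^ (1 - κ), t) → 0` (`FE.P_decay`). As `en` is comparable to the radial density of the
quantity in the theorem (`Profile.J_le`, `Profile.en_le`), polar coordinates finish the proof.
-/

noncomputable section

open MeasureTheory Metric Filter Real Set

/-- The Laplacian of `f : ℝ^d → ℝ`, written as the sum of second partial derivatives
in the coordinate directions. -/
def lap {d : ℕ} (f : EuclideanSpace ℝ (Fin d) → ℝ) (x : EuclideanSpace ℝ (Fin d)) : ℝ :=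
  ∑ i : Fin d, fderiv ℝ (fun y => fderiv ℝ f y (EuclideanSpace.single i 1)) x
    (EuclideanSpace.single i 1)

/-- A finite-energy radial classical solution of the defocusing nonlinear wave equation
with inverse-square potential `∂ₜ²u − Δu + a|x|⁻²u = −|u|^{p−1}u` on `ℝ^d`. -/
structure Sol (d : ℕ) (a p : ℝ) where
  /-- the solution, as a function of `(x, t)` -/
  u : EuclideanSpace ℝ (Fin d) → ℝ → ℝ
  /-- the radial profile: `u(x,t)` depends on `x` only through `r = |x|` -/
  rad : ℝ → ℝ → ℝ
  u_eq_rad : ∀ (x : EuclideanSpace ℝ (Fin d)) (t : ℝ), u x t = rad ‖x‖ t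
  smooth : ContDiffOn ℝ 2 (fun q : EuclideanSpace ℝ (Fin d) × ℝ => u q.1 q.2)
    {q : EuclideanSpace ℝ (Fin d) × ℝ | q.1 ≠ 0}
  pde : ∀ (x : EuclideanSpace ℝ (Fin d)) (t : ℝ), x ≠ 0 →
    deriv (deriv (u x)) t - lap (fun y => u y t) x + a * u x t / ‖x‖ ^ 2
      = -(|u x t| ^ (p - 1) * u x t)
  finite : ∀ t : ℝ, Integrable (fun x : EuclideanSpace ℝ (Fin d) =>
    ‖gradient (fun y => u y t) x‖ ^ 2 + (u x t) ^ 2 / ‖x‖ ^ 2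
      + (deriv (u x) t) ^ 2 + |u x t| ^ (p + 1))
  /-- the (conserved) energy -/
  energy : ℝ
  energy_def : ∀ t : ℝ, energy = ∫ x : EuclideanSpace ℝ (Fin d),
    ((1:ℝ)/2 * ‖gradient (fun y => u y t) x‖ ^ 2 + a / 2 * (u x t) ^ 2 / ‖x‖ ^ 2
      + 1/2 * (deriv (u x) t) ^ 2 + 1/(p+1) * |u x t| ^ (p + 1))

/-- The surface integral `∫_{|x|=R} g dS` over the sphere of radius `R` in `ℝ^d`,
expressed via the surface measure `volume.toSphere` on the unit sphere. -/
def sphereIntegral (d : ℕ) (R : ℝ) (g : EuclideanSpace ℝ (Fin d) → ℝ) : ℝ :=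
  R ^ (d - 1) * ∫ ω : Metric.sphere (0 : EuclideanSpace ℝ (Fin d)) 1,
    g (R • (ω : EuclideanSpace ℝ (Fin d)))
      ∂((volume : Measure (EuclideanSpace ℝ (Fin d))).toSphere)

/-! ### The wave equation on the half plane and its energy -/

/-- The divergence theorem on the rectangle `[a, b] × [t₁, t₂]`: `∂_t H - ∂_r X` integrated over the
rectangle is the change of `∫ H dr` minus the flux of `X` through the vertical sides. -/
lemma rect_identity {H Ht X Xr : ℝ → ℝ → ℝ} {a b t₁ t₂ : ℝ} (hab : a ≤ b) (ht : t₁ ≤ t₂)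
    (hH : ∀ r ∈ Icc a b, ∀ t ∈ Icc t₁ t₂, HasDerivAt (H r) (Ht r t) t)
    (hX : ∀ r ∈ Icc a b, ∀ t ∈ Icc t₁ t₂, HasDerivAt (fun r => X r t) (Xr r t) r)
    (cH : ∀ t ∈ Icc t₁ t₂, ContinuousOn (fun r => H r t) (Icc a b))
    (cX : ∀ r ∈ Icc a b, ContinuousOn (X r) (Icc t₁ t₂))
    (cHt : ContinuousOn (fun q : ℝ × ℝ => Ht q.1 q.2) (Icc a b ×ˢ Icc t₁ t₂))
    (cXr : ContinuousOn (fun q : ℝ × ℝ => Xr q.1 q.2) (Icc a b ×ˢ Icc t₁ t₂)) :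
    (∫ r in a..b, H r t₂) - ∫ r in a..b, H r t₁ =
      (∫ t in t₁..t₂, (X b t - X a t)) + ∫ t in t₁..t₂, ∫ r in a..b, (Ht r t - Xr r t) := by
  have ma : a ∈ Icc a b := ⟨le_rfl, hab⟩
  have mb : b ∈ Icc a b := ⟨hab, le_rfl⟩
  have m1 : t₁ ∈ Icc t₁ t₂ := ⟨le_rfl, ht⟩
  have m2 : t₂ ∈ Icc t₁ t₂ := ⟨ht, le_rfl⟩
  have cHt1 : ∀ r ∈ Icc a b, ContinuousOn (fun t => Ht r t) (Icc t₁ t₂) := fun r hr =>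
    cHt.comp (f := fun t => (r, t)) (by fun_prop) (fun t h => ⟨hr, h⟩)
  have cHt2 : ∀ t ∈ Icc t₁ t₂, ContinuousOn (fun r => Ht r t) (Icc a b) := fun t hr =>
    cHt.comp (f := fun r => (r, t)) (by fun_prop) (fun t h => ⟨h, hr⟩)
  have cXr2 : ∀ t ∈ Icc t₁ t₂, ContinuousOn (fun r => Xr r t) (Icc a b) := fun t hr =>
    cXr.comp (f := fun r => (r, t)) (by fun_prop) (fun t h => ⟨h, hr⟩)
  have ii : ∀ {f : ℝ → ℝ}, ContinuousOn f (Icc a b) → IntervalIntegrable f volume a b :=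
    fun h => ContinuousOn.intervalIntegrable (by rwa [uIcc_of_le hab])
  have it : ∀ {f : ℝ → ℝ}, ContinuousOn f (Icc t₁ t₂) → IntervalIntegrable f volume t₁ t₂ :=
    fun h => ContinuousOn.intervalIntegrable (by rwa [uIcc_of_le ht])
  have e1 : (∫ r in a..b, H r t₂) - ∫ r in a..b, H r t₁ = ∫ r in a..b, ∫ t in t₁..t₂, Ht r t := by
    rw [← intervalIntegral.integral_sub (ii (cH t₂ m2)) (ii (cH t₁ m1))]
    refine intervalIntegral.integral_congr fun r hr => ?_
    rw [uIcc_of_le hab] at hr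
    refine (intervalIntegral.integral_eq_sub_of_hasDerivAt (fun t h => ?_) (it (cHt1 r hr))).symm
    rw [uIcc_of_le ht] at h
    exact hH r hr t h
  have h_integ0 : Integrable (Function.uncurry Ht)
      ((volume.restrict (Set.uIoc a b)).prod (volume.restrict (Set.uIoc t₁ t₂))) := by
    rw [Measure.prod_restrict]
    have : IntegrableOn (Function.uncurry Ht) (Icc a b ×ˢ Icc t₁ t₂) (volume.prod volume) :=
      ContinuousOn.integrableOn_compact (isCompact_Icc.prod isCompact_Icc) cHt
    refine this.mono_set (prod_mono ?_ ?_)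
    · rw [uIoc_of_le hab]; exact Ioc_subset_Icc_self
    · rw [uIoc_of_le ht]; exact Ioc_subset_Icc_self
  have e2 : ∫ r in a..b, ∫ t in t₁..t₂, Ht r t = ∫ t in t₁..t₂, ∫ r in a..b, Ht r t :=
    intervalIntegral_intervalIntegral_swap
      (by rwa [IntegrableOn, Measure.volume_eq_prod, ← Measure.prod_restrict])
  have hHi : IntervalIntegrable (fun t => ∫ r in a..b, Ht r t) volume t₁ t₂ := by
    have := h_integ0.integral_prod_right
    rw [intervalIntegrable_iff]
    simp only [intervalIntegral.integral_of_le hab]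
    rw [uIoc_of_le hab] at this
    exact this
  have e3 : ∫ t in t₁..t₂, ∫ r in a..b, (Ht r t - Xr r t)
      = ∫ t in t₁..t₂, ((∫ r in a..b, Ht r t) - (X b t - X a t)) := by
    refine intervalIntegral.integral_congr fun t h => ?_
    rw [uIcc_of_le ht] at h
    rw [intervalIntegral.integral_sub (ii (cHt2 t h)) (ii (cXr2 t h))]
    congr 1
    refine intervalIntegral.integral_eq_sub_of_hasDerivAt (f := fun r => X r t)
      (fun r hr => ?_) (ii (cXr2 t h))
    rw [uIcc_of_le hab] at hr
    exact hX r hr t h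
  rw [e1, e2, e3, intervalIntegral.integral_sub hHi (it (f := fun t => X b t - X a t) ((cX b mb).sub (cX a ma)))]
  ring

/-- A classical solution `g(r, t)` of
`g_tt = g_rr + g_r / r - m g / r² - r ^ (-al) |g| ^ (p - 1) g` on the half plane `r > 0`.
The partial derivatives up to second order are part of the data, named by suffixes (`gtr` is
`∂_r ∂_t g = ∂_t ∂_r g`); values at `r ≤ 0` are unconstrained. -/
structure RadialWave (m al p : ℝ) where
  g : ℝ → ℝ → ℝ
  gt : ℝ → ℝ → ℝ
  gr : ℝ → ℝ → ℝ
  gtt : ℝ → ℝ → ℝ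
  gtr : ℝ → ℝ → ℝ
  grr : ℝ → ℝ → ℝ
  cg : ContinuousOn (fun q : ℝ × ℝ => g q.1 q.2) {q | 0 < q.1}
  cgt : ContinuousOn (fun q : ℝ × ℝ => gt q.1 q.2) {q | 0 < q.1}
  cgr : ContinuousOn (fun q : ℝ × ℝ => gr q.1 q.2) {q | 0 < q.1}
  cgtt : ContinuousOn (fun q : ℝ × ℝ => gtt q.1 q.2) {q | 0 < q.1}
  cgtr : ContinuousOn (fun q : ℝ × ℝ => gtr q.1 q.2) {q | 0 < q.1}
  cgrr : ContinuousOn (fun q : ℝ × ℝ => grr q.1 q.2) {q | 0 < q.1}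
  dg_t : ∀ r t, 0 < r → HasDerivAt (fun t => g r t) (gt r t) t
  dg_r : ∀ r t, 0 < r → HasDerivAt (fun r => g r t) (gr r t) r
  dgt_t : ∀ r t, 0 < r → HasDerivAt (fun t => gt r t) (gtt r t) t
  dgt_r : ∀ r t, 0 < r → HasDerivAt (fun r => gt r t) (gtr r t) r
  dgr_t : ∀ r t, 0 < r → HasDerivAt (fun t => gr r t) (gtr r t) t
  dgr_r : ∀ r t, 0 < r → HasDerivAt (fun r => gr r t) (grr r t) r
  eqn : ∀ r t, 0 < r → gtt r t = grr r t + gr r t / r - m * g r t / r ^ 2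
    - r ^ (-al) * (|g r t| ^ (p - 1) * g r t)

namespace RadialWave
variable {m al p : ℝ} (W : RadialWave m al p)

/-- The potential energy density `r ^ (1 - al) |g| ^ (p + 1) / (p + 1)`. -/
def N (r t : ℝ) : ℝ := r ^ (1 - al) * |W.g r t| ^ (p + 1) / (p + 1)

/-- The nonlinearity `r ^ (-al) |g| ^ (p - 1) g`. -/
def h (r t : ℝ) : ℝ := r ^ (-al) * (|W.g r t| ^ (p - 1) * W.g r t)

/-- The energy density, with respect to `dr`. -/
def en (r t : ℝ) : ℝ :=
  r * (W.gt r t ^ 2 + W.gr r t ^ 2) / 2 + m * W.g r t ^ 2 / (2 * r) + W.N r t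

/-- The momentum density `r g_t g_r`, which is also the energy flux. -/
def mo (r t : ℝ) : ℝ := r * W.gt r t * W.gr r t

/-- The partial derivative `∂_r en`. -/
def enr (r t : ℝ) : ℝ :=
  (W.gt r t ^ 2 + W.gr r t ^ 2) / 2
    + r * (W.gt r t * W.gtr r t + W.gr r t * W.grr r t) + m * W.g r t * W.gr r t / r
    - m * W.g r t ^ 2 / (2 * r ^ 2) + (1 - al) * W.N r t / r + r * W.h r t * W.gr r t

/-- The partial derivative `∂_t mo`. -/
def mot (r t : ℝ) : ℝ := r * (W.gtt r t * W.gr r t + W.gt r t * W.gtr r t)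

/-- The common value of `∂_t en` and `∂_r mo`. -/
def ent (r t : ℝ) : ℝ :=
  W.gt r t * W.gr r t + r * (W.gtr r t * W.gr r t + W.gt r t * W.grr r t)

section
variable {r t : ℝ}

lemma N_nonneg (hp : 1 < p) (hr : 0 < r) : 0 ≤ W.N r t := by
  unfold N; positivity

/-- Pairing the nonlinearity with `g` gives a multiple of the potential energy density. -/
lemma rgh (hp : 1 < p) (hr : 0 < r) : r * W.h r t * W.g r t = (p + 1) * W.N r t := by
  unfold N h
  have h1 : r ^ (1 - al) = r * r ^ (-al) := by
    rw [sub_eq_add_neg, rpow_add hr, rpow_one]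
  have h2 : |W.g r t| ^ (p + 1) = |W.g r t| ^ (p - 1) * W.g r t ^ 2 := by
    rw [← sq_abs, ← rpow_natCast |W.g r t| 2, ← rpow_add_of_nonneg (abs_nonneg _) (by linarith)
      (by norm_num)]
    congr 1; push_cast; ring
  rw [h1, h2]
  field_simp

lemma dabs (hp : 1 < p) {f : ℝ → ℝ} {f' x : ℝ} (hf : HasDerivAt f f' x) :
    HasDerivAt (fun x => |f x| ^ (p + 1)) ((p + 1) * (|f x| ^ (p - 1) * f x) * f') x := by
  have := (hasDerivAt_abs_rpow (f x) (p := p + 1) (by linarith)).comp x hf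
  refine HasDerivAt.congr_deriv this ?_
  have : p + 1 - 2 = p - 1 := by ring
  rw [this]; ring

lemma dN_t (hp : 1 < p) (hr : 0 < r) :
    HasDerivAt (fun t => W.N r t) (r * W.h r t * W.gt r t) t := by
  have := ((dabs hp (W.dg_t r t hr)).const_mul (r ^ (1 - al))).div_const (p + 1)
  refine HasDerivAt.congr_deriv this ?_
  unfold h
  have h1 : r ^ (1 - al) = r * r ^ (-al) := by
    rw [sub_eq_add_neg, rpow_add hr, rpow_one]
  rw [h1]; field_simp

lemma dN_r (hp : 1 < p) (hr : 0 < r) :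
    HasDerivAt (fun r => W.N r t) ((1 - al) * W.N r t / r + r * W.h r t * W.gr r t) r := by
  have := ((hasDerivAt_rpow_const (x := r) (p := 1 - al) (Or.inl hr.ne')).mul
    (dabs hp (W.dg_r r t hr))).div_const (p + 1)
  refine HasDerivAt.congr_deriv this ?_
  unfold h N
  have h1 : r ^ (1 - al) = r * r ^ (-al) := by
    rw [sub_eq_add_neg, rpow_add hr, rpow_one]
  have h2 : r ^ (1 - al - 1) = r ^ (-al) := by congr 1; ring
  rw [h1, h2]; field_simp

lemma den_r (hp : 1 < p) (hr : 0 < r) : HasDerivAt (fun r => W.en r t) (W.enr r t) r := by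
  have h1 := ((hasDerivAt_id r).mul (((W.dgt_r r t hr).pow 2).add ((W.dgr_r r t hr).pow 2))).div_const 2
  have h2 := (((W.dg_r r t hr).pow 2).const_mul m).div ((hasDerivAt_id r).const_mul 2)
    (by simp [hr.ne'])
  have := (h1.add h2).add (W.dN_r (t := t) hp hr)
  refine HasDerivAt.congr_deriv this ?_
  simp only [enr, Pi.pow_apply, Pi.add_apply, id]
  field_simp
  push_cast
  ring

lemma den_t (hp : 1 < p) (hr : 0 < r) : HasDerivAt (fun t => W.en r t) (W.ent r t) t := by
  have h1 := ((((W.dgt_t r t hr).pow 2).add ((W.dgr_t r t hr).pow 2)).const_mul r).div_const 2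
  have h2 := (((W.dg_t r t hr).pow 2).const_mul m).div_const (2 * r)
  have := (h1.add h2).add (W.dN_t (t := t) hp hr)
  refine HasDerivAt.congr_deriv this ?_
  simp only [ent, W.eqn r t hr, h]
  field_simp
  push_cast
  ring

lemma dmo_r (hr : 0 < r) : HasDerivAt (fun r => W.mo r t) (W.ent r t) r := by
  have := ((hasDerivAt_id r).mul (W.dgt_r r t hr)).mul (W.dgr_r r t hr)
  refine HasDerivAt.congr_deriv this ?_
  simp only [ent, id]
  simp
  ring

lemma dmo_t (hr : 0 < r) : HasDerivAt (fun t => W.mo r t) (W.mot r t) t := by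
  have := ((W.dgt_t r t hr).const_mul r).mul (W.dgr_t r t hr)
  refine HasDerivAt.congr_deriv this ?_
  simp only [mot]
  ring

lemma abs_mo_le (hp : 1 < p) (hm : 0 < m) (hr : 0 < r) : |W.mo r t| ≤ W.en r t := by
  have h1 := W.N_nonneg (t := t) hp hr
  have h2 : 0 ≤ m * W.g r t ^ 2 / (2 * r) := by positivity
  have h3 : 0 ≤ r * (W.gt r t + W.gr r t) ^ 2 := by positivity
  have h4 : 0 ≤ r * (W.gt r t - W.gr r t) ^ 2 := by positivity
  unfold mo en
  rw [abs_le]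
  constructor <;> nlinarith

lemma en_nonneg (hp : 1 < p) (hm : 0 < m) (hr : 0 < r) : 0 ≤ W.en r t :=
  (abs_nonneg _).trans (W.abs_mo_le hp hm hr)
end

lemma cN (hp : 1 < p) : ContinuousOn (fun q : ℝ × ℝ => W.N q.1 q.2) {q | 0 < q.1} := by
  unfold N
  refine ContinuousOn.div_const (ContinuousOn.mul ?_ ?_) _
  · exact continuousOn_fst.rpow_const fun q hq => Or.inl (ne_of_gt hq)
  · exact W.cg.abs.rpow_const fun q hq => Or.inr (by linarith)

lemma ch (hp : 1 < p) : ContinuousOn (fun q : ℝ × ℝ => W.h q.1 q.2) {q | 0 < q.1} := by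
  unfold h
  refine (ContinuousOn.mul ?_ (ContinuousOn.mul ?_ W.cg))
  · exact continuousOn_fst.rpow_const fun q hq => Or.inl (ne_of_gt hq)
  · exact W.cg.abs.rpow_const fun q hq => Or.inr (by linarith)

lemma cen (hp : 1 < p) : ContinuousOn (fun q : ℝ × ℝ => W.en q.1 q.2) {q | 0 < q.1} := by
  have := W.cN hp; have := W.cg; have := W.cgt; have := W.cgr
  unfold en
  refine ContinuousOn.add (ContinuousOn.add (by fun_prop) (ContinuousOn.div (by fun_prop) (by fun_prop) ?_)) (by assumption)
  intro q hq
  have : q.1 ≠ 0 := ne_of_gt hq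
  simpa using this

lemma cmo : ContinuousOn (fun q : ℝ × ℝ => W.mo q.1 q.2) {q | 0 < q.1} := by
  have := W.cgt; have := W.cgr
  unfold mo; fun_prop

lemma cent : ContinuousOn (fun q : ℝ × ℝ => W.ent q.1 q.2) {q | 0 < q.1} := by
  have := W.cgt; have := W.cgr; have := W.cgtr; have := W.cgrr
  unfold ent; fun_prop

lemma cmot : ContinuousOn (fun q : ℝ × ℝ => W.mot q.1 q.2) {q | 0 < q.1} := by
  have := W.cgt; have := W.cgr; have := W.cgtr; have := W.cgtt
  unfold mot; fun_prop

lemma cenr (hp : 1 < p) : ContinuousOn (fun q : ℝ × ℝ => W.enr q.1 q.2) {q | 0 < q.1} := by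
  have := W.cN hp; have := W.ch hp
  have := W.cg; have := W.cgt; have := W.cgr; have := W.cgtr; have := W.cgrr
  have hne : ∀ q ∈ {q : ℝ × ℝ | 0 < q.1}, q.1 ≠ 0 := fun q hq => ne_of_gt hq
  unfold enr
  refine ContinuousOn.add (ContinuousOn.add (ContinuousOn.sub (ContinuousOn.add (by fun_prop) (ContinuousOn.div (by fun_prop) (by fun_prop) hne))
    (ContinuousOn.div (by fun_prop) (by fun_prop) ?_)) (ContinuousOn.div (by fun_prop) (by fun_prop) hne)) (by fun_prop)
  intro q hq
  have := hne q hq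
  positivity

end RadialWave

/-! ### Local energy and its flux -/

lemma hasDerivAt_smoothTransition (x : ℝ) :
    HasDerivAt smoothTransition (deriv smoothTransition x) x :=
  ((smoothTransition.contDiff (n := 1)).differentiable (by norm_num) x).hasDerivAt

lemma continuous_deriv_smoothTransition : Continuous (deriv smoothTransition) :=
  (smoothTransition.contDiff (n := 1)).continuous_deriv le_rfl

lemma deriv_smoothTransition_of_nonpos {x : ℝ} (hx : x ≤ 0) : deriv smoothTransition x = 0 := by
  have h : IsMinOn smoothTransition univ x := fun y _ => by
    change smoothTransition x ≤ smoothTransition y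
    rw [smoothTransition.zero_of_nonpos hx]; exact smoothTransition.nonneg y
  exact (h.isLocalMin Filter.univ_mem).deriv_eq_zero

lemma deriv_smoothTransition_of_one_le {x : ℝ} (hx : 1 ≤ x) : deriv smoothTransition x = 0 := by
  have h : IsMaxOn smoothTransition univ x := fun y _ => by
    change smoothTransition y ≤ smoothTransition x
    rw [smoothTransition.one_of_one_le hx]; exact smoothTransition.le_one y
  exact (h.isLocalMax Filter.univ_mem).deriv_eq_zero

lemma deriv_smoothTransition_nonneg (x : ℝ) : 0 ≤ deriv smoothTransition x :=
  smoothTransition.monotone.deriv_nonneg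

/-- The derivative of the smooth step is bounded, since it is supported in `[0, 1]`. -/
lemma exists_deriv_smoothTransition_le : ∃ C, 0 < C ∧ ∀ x, deriv smoothTransition x ≤ C := by
  obtain ⟨C, hC⟩ := (isCompact_Icc (a := (0:ℝ)) (b := 1)).exists_bound_of_continuousOn
    continuous_deriv_smoothTransition.continuousOn
  refine ⟨max C 1, by positivity, fun x => ?_⟩
  by_cases h0 : x ≤ 0
  · rw [deriv_smoothTransition_of_nonpos h0]; positivity
  by_cases h1 : 1 ≤ x
  · rw [deriv_smoothTransition_of_one_le h1]; positivity
  · push Not at h0 h1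
    exact ((le_abs_self _).trans (hC x ⟨h0.le, h1.le⟩)).trans (le_max_left _ _)

namespace RadialWave
variable {m al p : ℝ} (W : RadialWave m al p)

/-- At each time the energy density is integrable on `(0, ∞)`, with total energy `E₀` independent
of time. -/
structure FE (E₀ : ℝ) : Prop where
  int : ∀ t, IntegrableOn (fun r => W.en r t) (Ioi 0)
  tot : ∀ t, ∫ r in Ioi 0, W.en r t = E₀

/-- The local energy `∫_0^r en` at time `t`. -/
def P (r t : ℝ) : ℝ := ∫ ρ in (0:ℝ)..r, W.en ρ t

section
variable {W} {E₀ : ℝ} (hp : 1 < p) (hm : 0 < m) (F : W.FE E₀)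
include F

lemma FE.ii {a b : ℝ} (ha : 0 ≤ a) (hb : 0 ≤ b) (t : ℝ) :
    IntervalIntegrable (fun r => W.en r t) volume a b := by
  rw [intervalIntegrable_iff]
  exact (F.int t).mono_set fun x hx => lt_of_le_of_lt (le_min ha hb) hx.1

lemma FE.P_sub {a b : ℝ} (ha : 0 ≤ a) (hb : 0 ≤ b) (t : ℝ) :
    ∫ r in a..b, W.en r t = W.P b t - W.P a t := by
  unfold P
  rw [intervalIntegral.integral_interval_sub_left (F.ii le_rfl hb t) (F.ii le_rfl ha t)]

lemma FE.P_tendsto (t : ℝ) : Tendsto (fun r => W.P r t) atTop (nhds E₀) := by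
  rw [← F.tot t]
  exact intervalIntegral_tendsto_integral_Ioi 0 (F.int t) tendsto_id

/-- No energy concentrates at the origin at a fixed time. -/
lemma FE.P_tendsto_zero (t : ℝ) : Tendsto (fun n : ℕ => W.P (2 / n) t) atTop (nhds 0) := by
  have h := intervalIntegral.continuousOn_primitive_interval (a := 0) (b := 2) (μ := volume)
    (f := fun r => W.en r t) (by
      rw [uIcc_of_le (by norm_num)]
      exact (integrableOn_Icc_iff_integrableOn_Ioc).2 ((F.int t).mono_set Ioc_subset_Ioi_self))
  have h0 := h 0 (by simp)
  have e : (0:ℝ) = ∫ ρ in (0:ℝ)..0, W.en ρ t := by simp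
  rw [e]
  refine Tendsto.comp h0 ?_
  refine tendsto_nhdsWithin_iff.2 ⟨tendsto_const_div_atTop_nhds_zero_nat 2, ?_⟩
  filter_upwards [eventually_ge_atTop 1] with n hn
  rw [uIcc_of_le (by norm_num)]
  have : (1:ℝ) ≤ n := by exact_mod_cast hn
  exact ⟨by positivity, by rw [div_le_iff₀ (by positivity)]; linarith⟩

include hp in
lemma FE.dP_r {r : ℝ} (hr : 0 < r) (t : ℝ) : HasDerivAt (fun r => W.P r t) (W.en r t) r := by
  have hc : ContinuousOn (fun r => W.en r t) (Ioi 0) :=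
    (W.cen hp).comp (f := fun r => (r, t)) (by fun_prop) (fun r hr => hr)
  refine intervalIntegral.integral_hasDerivAt_right (F.ii le_rfl hr.le t) ?_
    (hc.continuousAt (Ioi_mem_nhds hr))
  exact hc.stronglyMeasurableAtFilter isOpen_Ioi _ hr

include hp hm

lemma FE.P_mono {a b : ℝ} (ha : 0 ≤ a) (hab : a ≤ b) (t : ℝ) : W.P a t ≤ W.P b t := by
  have h := F.P_sub ha (ha.trans hab) t
  have : 0 ≤ ∫ r in a..b, W.en r t := by
    rw [intervalIntegral.integral_of_le hab]
    exact setIntegral_nonneg measurableSet_Ioc fun r hr => W.en_nonneg hp hm (ha.trans_lt hr.1)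
  linarith

lemma FE.P_nonneg {r : ℝ} (hr : 0 ≤ r) (t : ℝ) : 0 ≤ W.P r t := by
  have := F.P_mono hp hm le_rfl hr t
  simpa [P] using this

lemma FE.P_le {r : ℝ} (hr : 0 ≤ r) (t : ℝ) : W.P r t ≤ E₀ :=
  ge_of_tendsto (F.P_tendsto t) (by
    filter_upwards [eventually_ge_atTop r] with x hx using F.P_mono hp hm hr hx t)

lemma FE.E_nonneg : 0 ≤ E₀ := (F.P_nonneg hp hm le_rfl 0).trans (F.P_le hp hm le_rfl 0)

/-- The local energy changes only by the flux through `r`. The identity is first proved for the exterior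
energy cut off at distance `n`, with an error `C E₀ (t₂ - t₁) / n`; conservation of the total energy
then converts it into a statement about the interior. -/
lemma FE.P_flux {r : ℝ} (hr : 0 < r) {t₁ t₂ : ℝ} (ht : t₁ ≤ t₂) :
    W.P r t₂ - W.P r t₁ = ∫ t in t₁..t₂, W.mo r t := by
  obtain ⟨C, hC0, hC⟩ := exists_deriv_smoothTransition_le
  have hE := F.E_nonneg hp hm
  let φ : ℕ → ℝ → ℝ := fun n ρ => smoothTransition (2 - ρ / n)
  let φ' : ℕ → ℝ → ℝ := fun n ρ => deriv smoothTransition (2 - ρ / n) * (-(1 / n))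
  have hφ : ∀ n ρ, HasDerivAt (φ n) (φ' n ρ) ρ := fun n ρ => by
    have := (hasDerivAt_smoothTransition (2 - ρ / n)).comp ρ
      (((hasDerivAt_id ρ).div_const (n:ℝ)).const_sub 2)
    exact HasDerivAt.congr_deriv this (by simp [φ'])
  have cφ : ∀ n, Continuous (φ n) := fun n =>
    smoothTransition.continuous.comp (by fun_prop)
  have cφ' : ∀ n, Continuous (φ' n) := fun n =>
    (continuous_deriv_smoothTransition.comp (by fun_prop)).mul continuous_const
  have sub : ∀ {b : ℝ}, Icc r b ×ˢ Icc t₁ t₂ ⊆ {q : ℝ × ℝ | 0 < q.1} :=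
    fun {b} q hq => hr.trans_le hq.1.1
  have cen1 : ∀ t, ContinuousOn (fun r => W.en r t) (Ioi 0) := fun t =>
    (W.cen hp).comp (f := fun r => (r, t)) (by fun_prop) (fun r hr => hr)
  have sub1 : ∀ {b : ℝ}, Icc r b ⊆ Ioi (0:ℝ) := fun {b} x hx => hr.trans_le hx.1
  -- Exterior energy identity on `[r, 2n]`; `φ n` is `1` up to radius `n` and `0` beyond `2n`.
  have key : ∀ n : ℕ, r < n →
      |(∫ ρ in r..(2 * n), φ n ρ * W.en ρ t₂) - (∫ ρ in r..(2 * n), φ n ρ * W.en ρ t₁)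
        + ∫ t in t₁..t₂, W.mo r t| ≤ C * E₀ * (t₂ - t₁) / n := by
    intro n hn
    have hn0 : (0:ℝ) < n := hr.trans hn
    have hab : r ≤ 2 * n := by linarith
    have id := rect_identity (H := fun r t => φ n r * W.en r t) (Ht := fun r t => φ n r * W.ent r t)
      (X := fun r t => φ n r * W.mo r t) (Xr := fun r t => φ' n r * W.mo r t + φ n r * W.ent r t)
      hab ht (fun ρ hρ t _ => (W.den_t hp (sub1 hρ)).const_mul _)
      (fun ρ hρ t _ => (hφ n ρ).mul (W.dmo_r (sub1 hρ)))
      (fun t _ => (cφ n).continuousOn.mul ((cen1 t).mono sub1))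
      (fun ρ hρ => continuousOn_const.mul
        (W.cmo.comp (f := fun t => (ρ, t)) (by fun_prop) (fun t _ => sub1 hρ)))
      (((cφ n).comp continuous_fst).continuousOn.mul (W.cent.mono sub))
      ((((cφ' n).comp continuous_fst).continuousOn.mul (W.cmo.mono sub)).add
        (((cφ n).comp continuous_fst).continuousOn.mul (W.cent.mono sub)))
    have f1 : φ n r = 1 := smoothTransition.one_of_one_le (by
      have : r / n ≤ 1 := by rw [div_le_one hn0]; exact hn.le
      linarith)
    have f2 : φ n (2 * n) = 0 := smoothTransition.zero_of_nonpos (by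
      have : 2 * (n:ℝ) / n = 2 := by field_simp
      linarith)
    simp only [f1, f2, zero_mul, one_mul, zero_sub, intervalIntegral.integral_neg] at id
    rw [id, neg_add_eq_sub, sub_add_cancel]
    have := intervalIntegral.norm_integral_le_of_norm_le_const (a := t₁) (b := t₂)
      (f := fun t => ∫ ρ in r..(2 * (n:ℝ)), (φ n ρ * W.ent ρ t - (φ' n ρ * W.mo ρ t + φ n ρ * W.ent ρ t)))
      (C := C * E₀ / n) (by
        intro t _
        have : ‖∫ ρ in r..(2 * (n:ℝ)), (φ n ρ * W.ent ρ t - (φ' n ρ * W.mo ρ t + φ n ρ * W.ent ρ t))‖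
            ≤ ∫ ρ in r..(2 * (n:ℝ)), C / n * W.en ρ t := by
          refine intervalIntegral.norm_integral_le_of_norm_le hab ?_
            ((F.ii hr.le (by positivity) t).const_mul _)
          refine ae_of_all _ fun ρ hρ => ?_
          have h0 : 0 < ρ := hr.trans hρ.1
          have e : φ n ρ * W.ent ρ t - (φ' n ρ * W.mo ρ t + φ n ρ * W.ent ρ t)
            = deriv smoothTransition (2 - ρ / n) / n * W.mo ρ t := by simp only [φ']; ring
          rw [e, norm_mul, Real.norm_eq_abs, Real.norm_eq_abs]
          have h1 : |deriv smoothTransition (2 - ρ / n) / n| ≤ C / n := by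
            rw [abs_of_nonneg (div_nonneg (deriv_smoothTransition_nonneg _) hn0.le)]
            gcongr; exact hC _
          exact mul_le_mul h1 (W.abs_mo_le hp hm h0) (abs_nonneg _) (by positivity)
        refine this.trans ?_
        rw [intervalIntegral.integral_const_mul, F.P_sub hr.le (by positivity)]
        have h1 := F.P_le hp hm (r := 2 * n) (by positivity) t
        have h2 := F.P_nonneg hp hm hr.le t
        calc C / n * (W.P (2 * n) t - W.P r t) ≤ C / n * E₀ := by gcongr; linarith
          _ = C * E₀ / n := by ring)
    rw [Real.norm_eq_abs, abs_of_nonneg (sub_nonneg.2 ht)] at this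
    exact this.trans (le_of_eq (by ring))
  have lim : ∀ t, Tendsto (fun n : ℕ => ∫ ρ in r..(2 * (n:ℝ)), φ n ρ * W.en ρ t) atTop
      (nhds (E₀ - W.P r t)) := by
    intro t
    have l1 : Tendsto (fun n : ℕ => W.P n t - W.P r t) atTop (nhds (E₀ - W.P r t)) :=
      ((F.P_tendsto t).comp tendsto_natCast_atTop_atTop).sub_const _
    have l2 : Tendsto (fun n : ℕ => W.P (2 * n) t - W.P r t) atTop (nhds (E₀ - W.P r t)) :=
      ((F.P_tendsto t).comp (tendsto_natCast_atTop_atTop.const_mul_atTop (by norm_num))).sub_const _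
    refine tendsto_of_tendsto_of_tendsto_of_le_of_le' l1 l2 ?_ ?_
    · filter_upwards [eventually_gt_atTop ⌈r⌉₊] with n hn
      have hn : r < n := (Nat.le_ceil r).trans_lt (by exact_mod_cast hn)
      have hn0 : (0:ℝ) < n := hr.trans hn
      rw [← F.P_sub hr.le hn0.le]
      have hc : ∀ b, ContinuousOn (fun ρ => φ n ρ * W.en ρ t) (Icc r b) := fun b =>
        (cφ n).continuousOn.mul ((cen1 t).mono sub1)
      have i1 : IntervalIntegrable (fun ρ => φ n ρ * W.en ρ t) volume r n :=
        ContinuousOn.intervalIntegrable (by rw [uIcc_of_le hn.le]; exact hc _)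
      have i2 : IntervalIntegrable (fun ρ => φ n ρ * W.en ρ t) volume n (2 * n) :=
        ContinuousOn.intervalIntegrable (by
          rw [uIcc_of_le (by linarith)]
          exact (hc (2*n)).mono (Icc_subset_Icc_left hn.le))
      rw [← intervalIntegral.integral_add_adjacent_intervals i1 i2]
      have e1 : ∫ ρ in r..(n:ℝ), W.en ρ t = ∫ ρ in r..(n:ℝ), φ n ρ * W.en ρ t := by
        refine intervalIntegral.integral_congr fun ρ hρ => ?_
        rw [uIcc_of_le hn.le] at hρ
        have : φ n ρ = 1 := smoothTransition.one_of_one_le (by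
          have : ρ / n ≤ 1 := by rw [div_le_one hn0]; exact hρ.2
          linarith)
        simp [this]
      rw [e1]
      have : 0 ≤ ∫ ρ in (n:ℝ)..(2*n), φ n ρ * W.en ρ t := by
        refine intervalIntegral.integral_nonneg (by linarith) fun ρ hρ => ?_
        exact mul_nonneg (smoothTransition.nonneg _) (W.en_nonneg hp hm (hn0.trans_le hρ.1))
      linarith
    · filter_upwards [eventually_gt_atTop ⌈r⌉₊] with n hn
      have hn : r < n := (Nat.le_ceil r).trans_lt (by exact_mod_cast hn)
      have hn0 : (0:ℝ) < n := hr.trans hn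
      rw [← F.P_sub hr.le (by positivity)]
      refine intervalIntegral.integral_mono_on (by linarith) ?_ (F.ii hr.le (by positivity) t) ?_
      · exact ContinuousOn.intervalIntegrable (by
          rw [uIcc_of_le (by linarith)]
          exact (cφ n).continuousOn.mul ((cen1 t).mono sub1))
      · intro ρ hρ
        have := W.en_nonneg (t := t) hp hm (sub1 hρ)
        exact mul_le_of_le_one_left this (smoothTransition.le_one _)
  have L := (((lim t₂).sub (lim t₁)).add_const (∫ t in t₁..t₂, W.mo r t)).abs
  have R0 : Tendsto (fun n : ℕ => C * E₀ * (t₂ - t₁) / (n:ℝ)) atTop (nhds 0) :=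
    tendsto_const_div_atTop_nhds_zero_nat _
  have := le_of_tendsto_of_tendsto L R0 (by
    filter_upwards [eventually_gt_atTop ⌈r⌉₊] with n hn
    exact key n ((Nat.le_ceil r).trans_lt (by exact_mod_cast hn)))
  have := abs_nonpos_iff.1 this
  linarith

lemma FE.dP_t {r : ℝ} (hr : 0 < r) (t : ℝ) : HasDerivAt (fun t => W.P r t) (W.mo r t) t := by
  have hc : Continuous (fun t => W.mo r t) := by
    rw [← continuousOn_univ]
    exact W.cmo.comp (f := fun t => (r, t)) (by fun_prop) (fun t _ => hr)
  have h1 : (fun s => W.P r s) = fun s => W.P r t + ∫ τ in t..s, W.mo r τ := by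
    funext s
    rcases le_total t s with h | h
    · rw [← F.P_flux hp hm hr h]; ring
    · rw [intervalIntegral.integral_symm, ← F.P_flux hp hm hr h]; ring
  rw [h1]
  exact (intervalIntegral.integral_hasDerivAt_right (hc.intervalIntegrable _ _)
    hc.aestronglyMeasurable.stronglyMeasurableAtFilter hc.continuousAt).const_add _

/-- Joint continuity of `P`: near a point with `r > δ`, split `P(r, t) = P(δ, t) + ∫_δ^r en`. Replacing
`en` by its value at `max r δ` makes the integrand continuous on the whole plane. -/
lemma FE.cP : ContinuousOn (fun q : ℝ × ℝ => W.P q.1 q.2) {q | 0 < q.1} := by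
  intro q hq
  have hq : 0 < q.1 := hq
  set δ := q.1 / 2 with hδ
  have hδ0 : 0 < δ := by positivity
  have c1 : Continuous (fun z : ℝ × ℝ => W.en (max z.2 δ) z.1) := by
    rw [← continuousOn_univ]
    exact (W.cen hp).comp (f := fun z : ℝ × ℝ => (max z.2 δ, z.1)) (by fun_prop)
      (fun z _ => lt_max_of_lt_right hδ0)
  have c2 := intervalIntegral.continuous_parametric_primitive_of_continuous (a₀ := δ)
    (f := fun t r => W.en (max r δ) t) (μ := volume) c1
  have c3 : Continuous (fun t => W.P δ t) :=
    continuous_iff_continuousAt.2 fun t => (F.dP_t hp hm hδ0 t).continuousAt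
  have c4 : Continuous (fun z : ℝ × ℝ => W.P δ z.2 + ∫ r in δ..z.1, W.en (max r δ) z.2) :=
    (c3.comp continuous_snd).add (c2.comp (continuous_snd.prodMk continuous_fst))
  refine ContinuousAt.continuousWithinAt (c4.continuousAt.congr ?_)
  filter_upwards [(isOpen_Ioi.preimage continuous_fst).mem_nhds
    (show q ∈ Prod.fst ⁻¹' Ioi δ by simp [hδ]; linarith)] with z hz
  have hz : δ < z.1 := hz
  have : ∫ r in δ..z.1, W.en (max r δ) z.2 = ∫ r in δ..z.1, W.en r z.2 := by
    refine intervalIntegral.integral_congr fun ρ hρ => ?_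
    rw [uIcc_of_le hz.le] at hρ
    simp [max_eq_left hρ.1]
  rw [this, F.P_sub hδ0.le (hδ0.trans hz).le]
  ring
end
end RadialWave

/-! ### The Morawetz identity and the weighted flux inequality -/

namespace RadialWave
variable {m al p : ℝ} (W : RadialWave m al p)

/-- The density of the Morawetz functional. Up to the nonnegative terms in `q_eq` it is the incoming
energy `r (g_t + g_r + g / (2 r))² / 2`. -/
def q (r t : ℝ) : ℝ :=
  W.en r t + W.mo r t + W.g r t * (W.gt r t + W.gr r t) / 2 + W.g r t ^ 2 / (4 * r)

/-- The flux that accompanies `q` in the Morawetz identity. -/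
def x (r t : ℝ) : ℝ :=
  r * (W.gt r t + W.gr r t) ^ 2 / 2 + W.g r t * (W.gt r t + W.gr r t) / 2
    - m * W.g r t ^ 2 / (2 * r) - W.N r t

/-- The partial derivative `∂_t q`. -/
def qt (r t : ℝ) : ℝ :=
  W.ent r t + W.mot r t + W.gt r t * (W.gt r t + W.gr r t) / 2
    + W.g r t * (W.gtt r t + W.gtr r t) / 2 + W.g r t * W.gt r t / (2 * r)

/-- The partial derivative `∂_r x`. -/
def xr (r t : ℝ) : ℝ :=
  (W.gt r t + W.gr r t) ^ 2 / 2 + r * (W.gt r t + W.gr r t) * (W.gtr r t + W.grr r t)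
    + W.gr r t * (W.gt r t + W.gr r t) / 2 + W.g r t * (W.gtr r t + W.grr r t) / 2
    - m * W.g r t * W.gr r t / r + m * W.g r t ^ 2 / (2 * r ^ 2)
    - ((1 - al) * W.N r t / r + r * W.h r t * W.gr r t)

section
variable {r t : ℝ}

lemma dq_t (hp : 1 < p) (hr : 0 < r) : HasDerivAt (fun t => W.q r t) (W.qt r t) t := by
  have := (((W.den_t (t := t) hp hr).add (W.dmo_t (t := t) hr)).add
    (((W.dg_t r t hr).mul ((W.dgt_t r t hr).add (W.dgr_t r t hr))).div_const 2)).add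
    (((W.dg_t r t hr).pow 2).div_const (4 * r))
  refine HasDerivAt.congr_deriv this ?_
  simp only [qt, Pi.add_apply]
  field_simp
  push_cast
  ring

lemma dx_r (hp : 1 < p) (hr : 0 < r) : HasDerivAt (fun r => W.x r t) (W.xr r t) r := by
  have hS := (W.dgt_r r t hr).add (W.dgr_r r t hr)
  have := (((((hasDerivAt_id r).mul (hS.pow 2)).div_const 2).add
    (((W.dg_r r t hr).mul hS).div_const 2)).sub
    ((((W.dg_r r t hr).pow 2).const_mul m).div ((hasDerivAt_id r).const_mul 2)
    (by simp [hr.ne']))).sub (W.dN_r (t := t) hp hr)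
  refine HasDerivAt.congr_deriv this ?_
  simp only [xr, Pi.add_apply, Pi.pow_apply, id]
  field_simp
  push_cast
  ring

/-- The Morawetz identity `∂_t (r q) - ∂_r (r x) = -(en + mo) - (al + (p - 1) / 2 - 2) N`, both terms on
the right being nonpositive when `al + (p - 1) / 2 ≥ 2`. -/
lemma morawetz_identity (hp : 1 < p) (hr : 0 < r) :
    r * W.qt r t - W.x r t - r * W.xr r t
      = -(W.en r t + W.mo r t) - (al + (p - 1) / 2 - 2) * W.N r t := by
  have h1 := W.rgh (t := t) hp hr
  have h2 := W.eqn r t hr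
  rw [← h.eq_1 W r t] at h2
  have h3 : W.N r t = r * W.h r t * W.g r t / (p + 1) := by rw [h1]; field_simp
  simp only [qt, x, xr, ent, mot, en, mo, h2, h3]
  have : p + 1 ≠ 0 := by linarith
  field_simp
  ring

lemma q_sub_x_nonneg (hp : 1 < p) (hm : 0 < m) (hr : 0 < r) : 0 ≤ W.q r t - W.x r t := by
  have : W.q r t - W.x r t = m * W.g r t ^ 2 / r + W.g r t ^ 2 / (4 * r) + 2 * W.N r t := by
    simp only [q, x, en, mo]; field_simp; ring
  rw [this]
  have := W.N_nonneg (t := t) hp hr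
  positivity

lemma q_eq (hr : 0 < r) : W.q r t = r * (W.gt r t + W.gr r t + W.g r t / (2 * r)) ^ 2 / 2
    + (m / 2 + 1 / 8) * (W.g r t ^ 2 / r) + W.N r t := by
  simp only [q, en, mo]; field_simp; ring

lemma q_nonneg (hp : 1 < p) (hm : 0 < m) (hr : 0 < r) : 0 ≤ W.q r t := by
  rw [W.q_eq hr]
  have := W.N_nonneg (t := t) hp hr
  positivity

lemma q_le (hp : 1 < p) (hm : 0 < m) (hr : 0 < r) : W.q r t ≤ (4 + 1 / m) * W.en r t := by
  have hN := W.N_nonneg (t := t) hp hr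
  have e : (4 + 1 / m) * W.en r t - W.q r t
    = r * (W.gt r t + W.gr r t - W.g r t / (2 * r)) ^ 2 / 2 + r * (W.gt r t - W.gr r t) ^ 2
      + (1 / (2 * m)) * r * (W.gt r t ^ 2 + W.gr r t ^ 2) + (3 * m / 2 + 1 / 8) * (W.g r t ^ 2 / r)
      + (3 + 1 / m) * W.N r t := by
    simp only [q, en, mo]; field_simp; ring
  have : 0 ≤ (4 + 1 / m) * W.en r t - W.q r t := by rw [e]; positivity
  linarith

lemma neg_x_le (hp : 1 < p) (hm : 0 < m) (hr : 0 < r) : -W.x r t ≤ (4 + 1 / m) * W.en r t := by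
  have hN := W.N_nonneg (t := t) hp hr
  have e : (4 + 1 / m) * W.en r t + W.x r t
    = r * (W.gt r t + W.gr r t + W.g r t / (2 * r)) ^ 2 / 2
      + (2 + 1 / (2 * m)) * r * (W.gt r t ^ 2 + W.gr r t ^ 2) + (3 * m / 2 + 3 / 8) * (W.g r t ^ 2 / r)
      + (3 + 1 / m) * W.N r t := by
    simp only [x, en]; field_simp; ring
  have : 0 ≤ (4 + 1 / m) * W.en r t + W.x r t := by rw [e]; positivity
  linarith
end

lemma cq (hp : 1 < p) : ContinuousOn (fun q : ℝ × ℝ => W.q q.1 q.2) {q | 0 < q.1} := by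
  have := W.cen hp; have := W.cmo; have := W.cg; have := W.cgt; have := W.cgr
  unfold RadialWave.q
  refine ContinuousOn.add (by fun_prop) (ContinuousOn.div (by fun_prop) (by fun_prop) ?_)
  intro z hz
  have : z.1 ≠ 0 := ne_of_gt hz
  simpa using this

lemma cx (hp : 1 < p) : ContinuousOn (fun q : ℝ × ℝ => W.x q.1 q.2) {q | 0 < q.1} := by
  have := W.cN hp; have := W.cg; have := W.cgt; have := W.cgr
  unfold RadialWave.x
  refine ContinuousOn.sub (ContinuousOn.sub (by fun_prop)
    (ContinuousOn.div (by fun_prop) (by fun_prop) ?_)) (by fun_prop)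
  intro z hz
  have : z.1 ≠ 0 := ne_of_gt hz
  simpa using this

lemma cqt : ContinuousOn (fun q : ℝ × ℝ => W.qt q.1 q.2) {q | 0 < q.1} := by
  have := W.cent; have := W.cmot; have := W.cg; have := W.cgt; have := W.cgr
  have := W.cgtt; have := W.cgtr
  unfold qt
  refine ContinuousOn.add (by fun_prop) (ContinuousOn.div (by fun_prop) (by fun_prop) ?_)
  intro z hz
  have : z.1 ≠ 0 := ne_of_gt hz
  simpa using this

lemma cxr (hp : 1 < p) : ContinuousOn (fun q : ℝ × ℝ => W.xr q.1 q.2) {q | 0 < q.1} := by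
  have := W.cN hp; have := W.ch hp
  have := W.cg; have := W.cgt; have := W.cgr; have := W.cgtr; have := W.cgrr
  have hne : ∀ q ∈ {q : ℝ × ℝ | 0 < q.1}, q.1 ≠ 0 := fun q hq => ne_of_gt hq
  unfold xr
  refine ContinuousOn.sub (ContinuousOn.add (ContinuousOn.sub (by fun_prop)
    (ContinuousOn.div (by fun_prop) (by fun_prop) hne))
    (ContinuousOn.div (by fun_prop) (by fun_prop) ?_))
    (ContinuousOn.add (ContinuousOn.div (by fun_prop) (by fun_prop) hne) (by fun_prop))
  intro q hq
  have := hne q hq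
  positivity

/-- A smooth cut-off near the origin: `0` for `r ≤ 1 / n` and `1` for `r ≥ 2 / n`. -/
def cut (n : ℕ) (r : ℝ) : ℝ := smoothTransition (n * r - 1)
/-- The derivative of `cut n`. -/
def cut' (n : ℕ) (r : ℝ) : ℝ := n * deriv smoothTransition (n * r - 1)

lemma dcut (n : ℕ) (r : ℝ) : HasDerivAt (cut n) (cut' n r) r := by
  have := (hasDerivAt_smoothTransition (n * r - 1)).comp r
      (((hasDerivAt_id r).const_mul (n:ℝ)).sub_const 1)
  exact HasDerivAt.congr_deriv this (by simp [cut', mul_comm])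

lemma ccut (n : ℕ) : Continuous (cut n) := smoothTransition.continuous.comp (by fun_prop)
lemma ccut' (n : ℕ) : Continuous (cut' n) :=
  continuous_const.mul (continuous_deriv_smoothTransition.comp (by fun_prop))
lemma cut_nonneg (n : ℕ) (r : ℝ) : 0 ≤ cut n r := smoothTransition.nonneg _
lemma cut_le (n : ℕ) (r : ℝ) : cut n r ≤ 1 := smoothTransition.le_one _

/-- The weighted Morawetz estimate. For a weight `a(t - r)` on the local energy that is dominated by
`K ψ(t + r)`, with `ψ` nonincreasing, the functional `∫ a(t - r) P + K r ψ(t + r) q dr` is nonincreasing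
up to the contribution of the cut-off near the origin, which is controlled by the energy in `r ≤ 2 / n`.
The weights vanish at the outer end `b`, so there is no boundary term there. -/
lemma weighted_flux {E₀ : ℝ} (hp : 1 < p) (hm : 0 < m) (F : W.FE E₀)
    (hal : 2 ≤ al + (p - 1) / 2) :
    ∃ C, 0 ≤ C ∧ ∀ (n : ℕ) (a a' ψ ψ' : ℝ → ℝ) (K b t₁ t₂ : ℝ), 1 ≤ n → 0 ≤ K → 2 / (n:ℝ) ≤ b →
      0 ≤ t₁ → t₁ ≤ t₂ →
      (∀ x, HasDerivAt a (a' x) x) → Continuous a' → (∀ x, 0 ≤ a x) → (∀ x, a x ≤ 1) →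
      (∀ x, 0 ≤ x → HasDerivAt ψ (ψ' x) x) → ContinuousOn ψ' (Ici 0) →
      (∀ x, 0 ≤ x → 0 ≤ ψ x) → (∀ x, 0 ≤ x → ψ x ≤ 1) → (∀ x, 0 ≤ x → ψ' x ≤ 0) →
      (∀ t ∈ Icc t₁ t₂, a (t - b) = 0) → (∀ t ∈ Icc t₁ t₂, ψ (t + b) = 0) →
      (∀ t ∈ Icc t₁ t₂, ∀ r, 0 < r → a (t - r) ≤ K * ψ (t + r)) →
      (∫ r in (1 / (n:ℝ))..b, cut n r * (a (t₂ - r) * W.P r t₂ + K * (r * ψ (t₂ + r) * W.q r t₂)))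
        ≤ (∫ r in (1 / (n:ℝ))..b,
            cut n r * (a (t₁ - r) * W.P r t₁ + K * (r * ψ (t₁ + r) * W.q r t₁)))
          + C * (1 + K) * ∫ t in t₁..t₂, W.P (2 / n) t := by
  obtain ⟨C₀, hC0, hC⟩ := exists_deriv_smoothTransition_le
  set D : ℝ := 4 + 1 / m with hD
  have hDpos : 0 < D := by positivity
  refine ⟨C₀ + 2 * C₀ * D, by positivity, ?_⟩
  intro n a a' ψ ψ' K b t₁ t₂ hn hK hnb ht0 ht ha ca' ha0 ha1 hψ cψ' hψ0 hψ1 hψ' hab hψb hdom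
  have hn0 : (0:ℝ) < n := by exact_mod_cast hn
  have hi0 : 0 < 1 / (n:ℝ) := by positivity
  have hi12 : 1 / (n:ℝ) ≤ 2 / n := by gcongr; norm_num
  have hib : 1 / (n:ℝ) ≤ b := hi12.trans hnb
  have hapos : ∀ {ρ}, ρ ∈ Icc (1 / (n:ℝ)) b → 0 < ρ := fun h => hi0.trans_le h.1
  have ca : Continuous a := continuous_iff_continuousAt.2 fun x => (ha x).continuousAt
  have cψ : ContinuousOn ψ (Ici 0) := fun x hx => (hψ x hx).continuousAt.continuousWithinAt
  have sub : Icc (1 / (n:ℝ)) b ×ˢ Icc t₁ t₂ ⊆ {q : ℝ × ℝ | 0 < q.1} := fun q hq => hapos hq.1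
  have cψ2 : ContinuousOn (fun z : ℝ × ℝ => ψ (z.2 + z.1)) (Icc (1 / (n:ℝ)) b ×ˢ Icc t₁ t₂) :=
    cψ.comp (f := fun z : ℝ × ℝ => z.2 + z.1) (by fun_prop) (fun z hz =>
      add_nonneg (ht0.trans hz.2.1) (hapos hz.1).le)
  have cψ'2 : ContinuousOn (fun z : ℝ × ℝ => ψ' (z.2 + z.1)) (Icc (1 / (n:ℝ)) b ×ˢ Icc t₁ t₂) :=
    cψ'.comp (f := fun z : ℝ × ℝ => z.2 + z.1) (by fun_prop) (fun z hz =>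
      add_nonneg (ht0.trans hz.2.1) (hapos hz.1).le)
  have cP := (F.cP hp hm).mono sub
  have cen := (W.cen hp).mono sub
  have cmo := W.cmo.mono sub
  have cq := (W.cq hp).mono sub
  have cx := (W.cx hp).mono sub
  have cqt := W.cqt.mono sub
  have cxr := (W.cxr hp).mono sub
  have ck : ContinuousOn (fun z : ℝ × ℝ => cut n z.1) (Icc (1 / (n:ℝ)) b ×ˢ Icc t₁ t₂) :=
    ((ccut n).comp continuous_fst).continuousOn
  have ck' : ContinuousOn (fun z : ℝ × ℝ => cut' n z.1) (Icc (1 / (n:ℝ)) b ×ˢ Icc t₁ t₂) :=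
    ((ccut' n).comp continuous_fst).continuousOn
  have ca2 : ContinuousOn (fun z : ℝ × ℝ => a (z.2 - z.1)) (Icc (1 / (n:ℝ)) b ×ˢ Icc t₁ t₂) :=
    (ca.comp (continuous_snd.sub continuous_fst)).continuousOn
  have ca'2 : ContinuousOn (fun z : ℝ × ℝ => a' (z.2 - z.1)) (Icc (1 / (n:ℝ)) b ×ˢ Icc t₁ t₂) :=
    (ca'.comp (continuous_snd.sub continuous_fst)).continuousOn
  let H : ℝ → ℝ → ℝ := fun r t =>
    cut n r * (a (t - r) * W.P r t + K * (r * ψ (t + r) * W.q r t))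
  let Ht : ℝ → ℝ → ℝ := fun r t => cut n r * (a' (t - r) * W.P r t + a (t - r) * W.mo r t
    + K * (r * ψ' (t + r) * W.q r t + r * ψ (t + r) * W.qt r t))
  let X : ℝ → ℝ → ℝ := fun r t =>
    cut n r * (-(a (t - r) * W.P r t) + K * (r * ψ (t + r) * W.x r t))
  let Xr : ℝ → ℝ → ℝ := fun r t =>
    cut' n r * (-(a (t - r) * W.P r t) + K * (r * ψ (t + r) * W.x r t))
    + cut n r * (a' (t - r) * W.P r t - a (t - r) * W.en r t
      + K * (ψ (t + r) * W.x r t + r * ψ' (t + r) * W.x r t + r * ψ (t + r) * W.xr r t))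
  have cr : ContinuousOn (fun z : ℝ × ℝ => z.1) (Icc (1 / (n:ℝ)) b ×ˢ Icc t₁ t₂) :=
    continuousOn_fst
  have cH2 : ContinuousOn (fun z : ℝ × ℝ => H z.1 z.2) (Icc (1 / (n:ℝ)) b ×ˢ Icc t₁ t₂) := by
    exact ck.mul ((ca2.mul cP).add (continuousOn_const.mul ((cr.mul cψ2).mul cq)))
  have cX2 : ContinuousOn (fun z : ℝ × ℝ => X z.1 z.2) (Icc (1 / (n:ℝ)) b ×ˢ Icc t₁ t₂) := by
    exact ck.mul ((ca2.mul cP).neg.add (continuousOn_const.mul ((cr.mul cψ2).mul cx)))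
  have cHt2 : ContinuousOn (fun z : ℝ × ℝ => Ht z.1 z.2) (Icc (1 / (n:ℝ)) b ×ˢ Icc t₁ t₂) := by
    exact ck.mul (((ca'2.mul cP).add (ca2.mul cmo)).add (continuousOn_const.mul
      (((cr.mul cψ'2).mul cq).add ((cr.mul cψ2).mul cqt))))
  have cXr2 : ContinuousOn (fun z : ℝ × ℝ => Xr z.1 z.2) (Icc (1 / (n:ℝ)) b ×ˢ Icc t₁ t₂) := by
    exact (ck'.mul ((ca2.mul cP).neg.add (continuousOn_const.mul ((cr.mul cψ2).mul cx)))).add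
      (ck.mul (((ca'2.mul cP).sub (ca2.mul cen)).add (continuousOn_const.mul
      (((cψ2.mul cx).add ((cr.mul cψ'2).mul cx)).add ((cr.mul cψ2).mul cxr)))))
  have dH : ∀ r ∈ Icc (1 / (n:ℝ)) b, ∀ t ∈ Icc t₁ t₂, HasDerivAt (H r) (Ht r t) t := by
    intro r hr t h
    have h0 := hapos hr
    have e1 := (ha (t - r)).comp t ((hasDerivAt_id t).sub_const r)
    have e2 := (hψ (t + r) (add_nonneg (ht0.trans h.1) h0.le)).comp t ((hasDerivAt_id t).add_const r)
    have := ((e1.mul (F.dP_t hp hm h0 t)).add (((e2.const_mul r).mul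
      (W.dq_t (t := t) hp h0)).const_mul K)).const_mul (cut n r)
    refine HasDerivAt.congr_deriv this ?_
    simp [Ht]
  have dX : ∀ r ∈ Icc (1 / (n:ℝ)) b, ∀ t ∈ Icc t₁ t₂, HasDerivAt (fun r => X r t) (Xr r t) r := by
    intro r hr t h
    have h0 := hapos hr
    have e1 := (ha (t - r)).comp r ((hasDerivAt_id r).const_sub t)
    have e2 := (hψ (t + r) (add_nonneg (ht0.trans h.1) h0.le)).comp r ((hasDerivAt_id r).const_add t)
    have := (dcut n r).mul ((e1.mul (F.dP_r hp h0 t)).neg.add ((((hasDerivAt_id r).mul e2).mul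
      (W.dx_r (t := t) hp h0)).const_mul K))
    refine HasDerivAt.congr_deriv this ?_
    simp only [Xr, Pi.add_apply, Pi.neg_apply, Pi.mul_apply, Function.comp_apply, id]
    ring
  have slice1 : ∀ {f : ℝ → ℝ → ℝ},
      ContinuousOn (fun z : ℝ × ℝ => f z.1 z.2) (Icc (1 / (n:ℝ)) b ×ˢ Icc t₁ t₂) →
      ∀ t ∈ Icc t₁ t₂, ContinuousOn (fun r => f r t) (Icc (1 / (n:ℝ)) b) := fun hf t h =>
    hf.comp (f := fun r => (r, t)) (by fun_prop) (fun r hr => ⟨hr, h⟩)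
  have slice2 : ∀ {f : ℝ → ℝ → ℝ},
      ContinuousOn (fun z : ℝ × ℝ => f z.1 z.2) (Icc (1 / (n:ℝ)) b ×ˢ Icc t₁ t₂) →
      ∀ r ∈ Icc (1 / (n:ℝ)) b, ContinuousOn (f r) (Icc t₁ t₂) := fun hf r h =>
    hf.comp (f := fun t => (r, t)) (by fun_prop) (fun t ht => ⟨h, ht⟩)
  have id := rect_identity hib ht dH dX (slice1 cH2) (slice2 cX2) cHt2 cXr2
  have hX0 : ∫ t in t₁..t₂, (X b t - X (1 / n) t) = 0 := by
    rw [← intervalIntegral.integral_zero (μ := volume) (a := t₁) (b := t₂)]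
    refine intervalIntegral.integral_congr fun t h => ?_
    rw [uIcc_of_le ht] at h
    have : cut n (1 / n) = 0 := smoothTransition.zero_of_nonpos (by field_simp; norm_num)
    show X b t - X (1 / n) t = 0
    simp only [X]
    rw [hab t h, hψb t h, this]
    ring
  rw [hX0, zero_add] at id
  -- Outside the support of `cut'` the integrand is nonpositive: `a ≤ K ψ` beats the source `en + mo`,
  -- `ψ' ≤ 0` has the good sign against `q - x ≥ 0`, and the coefficient of `N` is nonpositive.
  have pw : ∀ r ∈ Icc (1 / (n:ℝ)) b, ∀ t ∈ Icc t₁ t₂, Ht r t - Xr r t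
      ≤ cut' n r * (W.P r t + K * (r * (D * W.en r t))) := by
    intro r hr t h
    have h0 := hapos hr
    have htr : 0 ≤ t + r := add_nonneg (ht0.trans h.1) h0.le
    have id2 := W.morawetz_identity (t := t) hp h0
    have hk := cut_nonneg n r
    have hk' : 0 ≤ cut' n r := mul_nonneg hn0.le (deriv_smoothTransition_nonneg _)
    have hP := F.P_nonneg hp hm h0.le t
    have e : Ht r t - Xr r t = cut' n r * (a (t - r) * W.P r t)
        + cut' n r * K * r * (ψ (t + r) * (-W.x r t))
        + cut n r * ((a (t - r) - K * ψ (t + r)) * (W.en r t + W.mo r t))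
        + cut n r * K * (r * (ψ' (t + r) * (W.q r t - W.x r t)))
        - cut n r * K * ψ (t + r) * ((al + (p - 1) / 2 - 2) * W.N r t) := by
      simp only [Ht, Xr]
      linear_combination (cut n r * K * ψ (t + r)) * id2
    rw [e]
    have a1 : a (t - r) * W.P r t ≤ W.P r t := mul_le_of_le_one_left hP (ha1 _)
    have a2 : ψ (t + r) * (-W.x r t) ≤ D * W.en r t := by
      have := W.neg_x_le (t := t) hp hm h0
      have h2 : 0 ≤ D * W.en r t := mul_nonneg hDpos.le (W.en_nonneg hp hm h0)
      calc ψ (t + r) * (-W.x r t) ≤ ψ (t + r) * (D * W.en r t) :=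
            mul_le_mul_of_nonneg_left this (hψ0 _ htr)
        _ ≤ D * W.en r t := mul_le_of_le_one_left h2 (hψ1 _ htr)
    have a3 : (a (t - r) - K * ψ (t + r)) * (W.en r t + W.mo r t) ≤ 0 := by
      refine mul_nonpos_of_nonpos_of_nonneg (sub_nonpos.2 (hdom t h r h0)) ?_
      have := (abs_le.1 (W.abs_mo_le (t := t) hp hm h0)).1
      linarith
    have a4 : ψ' (t + r) * (W.q r t - W.x r t) ≤ 0 :=
      mul_nonpos_of_nonpos_of_nonneg (hψ' _ htr) (W.q_sub_x_nonneg hp hm h0)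
    have a5 : 0 ≤ cut n r * K * ψ (t + r) * ((al + (p - 1) / 2 - 2) * W.N r t) :=
      mul_nonneg (mul_nonneg (mul_nonneg hk hK) (hψ0 _ htr))
        (mul_nonneg (by linarith) (W.N_nonneg hp h0))
    have b1 := mul_le_mul_of_nonneg_left a1 hk'
    have b2 := mul_le_mul_of_nonneg_left a2 (mul_nonneg (mul_nonneg hk' hK) h0.le)
    have b3 := mul_nonpos_of_nonneg_of_nonpos hk a3
    have b4 := mul_nonpos_of_nonneg_of_nonpos (mul_nonneg hk hK)
      (mul_nonpos_of_nonneg_of_nonpos h0.le a4)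
    nlinarith
  have cP2 : ContinuousOn (fun t => W.P (2 / n) t) (Icc t₁ t₂) :=
    slice2 (f := W.P) cP _ ⟨hi12, hnb⟩
  have inner : ∀ t ∈ Icc t₁ t₂, ∫ r in (1 / (n:ℝ))..b, (Ht r t - Xr r t)
      ≤ (C₀ + 2 * C₀ * D) * (1 + K) * W.P (2 / n) t := by
    intro t h
    have hc : ContinuousOn (fun r => Ht r t - Xr r t) (Icc (1 / (n:ℝ)) b) :=
      (slice1 cHt2 t h).sub (slice1 cXr2 t h)
    have i1 : IntervalIntegrable (fun r => Ht r t - Xr r t) volume (1 / n) (2 / n) :=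
      ContinuousOn.intervalIntegrable (by
        rw [uIcc_of_le hi12]; exact hc.mono (Icc_subset_Icc_right hnb))
    have i2 : IntervalIntegrable (fun r => Ht r t - Xr r t) volume (2 / n) b :=
      ContinuousOn.intervalIntegrable (by
        rw [uIcc_of_le hnb]; exact hc.mono (Icc_subset_Icc_left hi12))
    rw [← intervalIntegral.integral_add_adjacent_intervals i1 i2]
    have z2 : ∫ r in (2 / (n:ℝ))..b, (Ht r t - Xr r t) ≤ 0 := by
      rw [← neg_nonneg, ← intervalIntegral.integral_neg]
      refine intervalIntegral.integral_nonneg hnb fun r hr => ?_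
      have := pw r ⟨hi12.trans hr.1, hr.2⟩ t h
      have hz : cut' n r = 0 := by
        unfold cut'
        rw [deriv_smoothTransition_of_one_le, mul_zero]
        have := (div_le_iff₀ hn0).1 hr.1
        linarith
      rw [hz, zero_mul] at this
      linarith
    have z1 : ∫ r in (1 / (n:ℝ))..(2 / n), (Ht r t - Xr r t)
        ≤ ∫ r in (1 / (n:ℝ))..(2 / n), (n * C₀ * W.P (2 / n) t + 2 * C₀ * K * D * W.en r t) := by
      have ien : IntervalIntegrable (fun r => W.en r t) volume (1 / n) (2 / n) :=
        F.ii hi0.le (hi0.le.trans hi12) t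
      refine intervalIntegral.integral_mono_on hi12 i1
        ((intervalIntegrable_const).add (ien.const_mul _)) fun r hr => ?_
      have hr' : r ∈ Icc (1 / (n:ℝ)) b := ⟨hr.1, hr.2.trans hnb⟩
      have h0 := hapos hr'
      refine (pw r hr' t h).trans ?_
      have hk' : 0 ≤ cut' n r := mul_nonneg hn0.le (deriv_smoothTransition_nonneg _)
      have hk'2 : cut' n r ≤ n * C₀ := mul_le_mul_of_nonneg_left (hC _) hn0.le
      have hP := F.P_nonneg hp hm h0.le t
      have hP2 := F.P_mono hp hm h0.le hr.2 t
      have hen := W.en_nonneg (t := t) hp hm h0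
      have hnr : n * r ≤ 2 := by have := (le_div_iff₀ hn0).1 hr.2; linarith
      have g1 : cut' n r * W.P r t ≤ n * C₀ * W.P (2 / n) t := by
        apply mul_le_mul hk'2 hP2 hP (by positivity)
      have g2 : cut' n r * r ≤ 2 * C₀ := by
        calc cut' n r * r ≤ n * C₀ * r := by gcongr
          _ = C₀ * (n * r) := by ring
          _ ≤ C₀ * 2 := by gcongr
          _ = _ := by ring
      have g3 : cut' n r * r * (K * (D * W.en r t)) ≤ 2 * C₀ * (K * (D * W.en r t)) :=
        mul_le_mul_of_nonneg_right g2 (by positivity)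
      nlinarith
    have z3 : ∫ r in (1 / (n:ℝ))..(2 / n), (n * C₀ * W.P (2 / n) t + 2 * C₀ * K * D * W.en r t)
        ≤ (C₀ + 2 * C₀ * D) * (1 + K) * W.P (2 / n) t := by
      have ien : IntervalIntegrable (fun r => W.en r t) volume (1 / n) (2 / n) :=
        F.ii hi0.le (hi0.le.trans hi12) t
      rw [intervalIntegral.integral_add intervalIntegrable_const (ien.const_mul _),
        intervalIntegral.integral_const, intervalIntegral.integral_const_mul,
        F.P_sub hi0.le (hi0.le.trans hi12), smul_eq_mul]
      have hP := F.P_nonneg hp hm hi0.le t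
      have hP2 := F.P_nonneg hp hm (hi0.le.trans hi12) t
      have e1 : (2 / (n:ℝ) - 1 / n) * (n * C₀ * W.P (2 / n) t) = C₀ * W.P (2 / n) t := by
        field_simp; ring
      rw [e1]
      have e2 : 2 * C₀ * K * D * (W.P (2 / n) t - W.P (1 / n) t) ≤ 2 * C₀ * K * D * W.P (2 / n) t := by
        gcongr; linarith
      have e3 : 0 ≤ C₀ * K * W.P (2 / n) t := by positivity
      have e4 : 0 ≤ 2 * C₀ * D * W.P (2 / n) t := by positivity
      nlinarith
    linarith
  have fin : ∫ t in t₁..t₂, ∫ r in (1 / (n:ℝ))..b, (Ht r t - Xr r t)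
      ≤ (C₀ + 2 * C₀ * D) * (1 + K) * ∫ t in t₁..t₂, W.P (2 / n) t := by
    have h_integ0 : IntervalIntegrable (fun t => (C₀ + 2 * C₀ * D) * (1 + K) * W.P (2 / n) t)
        volume t₁ t₂ :=
      ContinuousOn.intervalIntegrable (by rw [uIcc_of_le ht]; exact continuousOn_const.mul cP2)
    rw [← intervalIntegral.integral_const_mul]
    by_cases hi : IntervalIntegrable (fun t => ∫ r in (1 / (n:ℝ))..b, (Ht r t - Xr r t))
        volume t₁ t₂
    · exact intervalIntegral.integral_mono_on ht hi h_integ0 inner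
    -- A non-integrable integrand has integral zero, and the right-hand side is nonnegative.
    · rw [intervalIntegral.integral_undef hi]
      refine intervalIntegral.integral_nonneg ht fun t _ => ?_
      have := F.P_nonneg hp hm (hi0.le.trans hi12) t
      positivity
  linarith
end RadialWave

/-! ### The weighted functional and decay of the interior energy -/

namespace RadialWave
variable {m al p : ℝ} (W : RadialWave m al p)

/-- The weight `(1 + x) ^ (κ - 1)`, cut off smoothly so as to vanish for `x ≥ n + 1`. -/
def psi (κ : ℝ) (n : ℕ) (x : ℝ) : ℝ := (1 + x) ^ (κ - 1) * smoothTransition (n + 1 - x)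

/-- The derivative of `psi κ n` on `[0, ∞)`. -/
def psi' (κ : ℝ) (n : ℕ) (x : ℝ) : ℝ :=
  (κ - 1) * (1 + x) ^ (κ - 2) * smoothTransition (n + 1 - x)
    - (1 + x) ^ (κ - 1) * deriv smoothTransition (n + 1 - x)

section
variable {κ : ℝ} {n : ℕ} {x : ℝ}

lemma dpsi (hx : 0 ≤ x) : HasDerivAt (psi κ n) (psi' κ n x) x := by
  have h1 := ((hasDerivAt_id x).const_add 1).rpow_const (p := κ - 1) (Or.inl (by simp; linarith))
  have h2 := (hasDerivAt_smoothTransition (n + 1 - x)).comp x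
    ((hasDerivAt_id x).const_sub ((n:ℝ) + 1))
  refine HasDerivAt.congr_deriv (h1.mul h2) ?_
  have : κ - 1 - 1 = κ - 2 := by ring
  simp only [psi', id, this]
  ring

lemma cpsi' : ContinuousOn (psi' κ n) (Ici 0) := by
  have h1 : ∀ s : ℝ, ContinuousOn (fun x : ℝ => (1 + x) ^ s) (Ici 0) := fun s =>
    ContinuousOn.rpow_const (by fun_prop) fun x hx => Or.inl (by
      have : (0:ℝ) ≤ x := hx
      linarith)
  have h2 : Continuous (fun x : ℝ => smoothTransition (n + 1 - x)) :=
    smoothTransition.continuous.comp (by fun_prop)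
  have h3 : Continuous (fun x : ℝ => deriv smoothTransition (n + 1 - x)) :=
    continuous_deriv_smoothTransition.comp (by fun_prop)
  exact ((continuousOn_const.mul (h1 _)).mul h2.continuousOn).sub ((h1 _).mul h3.continuousOn)

lemma psi_nonneg (hx : 0 ≤ x) : 0 ≤ psi κ n x :=
  mul_nonneg (rpow_nonneg (by linarith) _) (smoothTransition.nonneg _)

lemma psi_le (hx : 0 ≤ x) : psi κ n x ≤ (1 + x) ^ (κ - 1) :=
  mul_le_of_le_one_right (rpow_nonneg (by linarith) _) (smoothTransition.le_one _)

lemma psi_le_one (hκ : κ ≤ 1) (hx : 0 ≤ x) : psi κ n x ≤ 1 :=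
  (psi_le hx).trans (rpow_le_one_of_one_le_of_nonpos (by linarith) (by linarith))

lemma psi'_nonpos (hκ : κ ≤ 1) (hx : 0 ≤ x) : psi' κ n x ≤ 0 := by
  have h1 : 0 ≤ (1 + x) ^ (κ - 2) := rpow_nonneg (by linarith) _
  have h2 : 0 ≤ (1 + x) ^ (κ - 1) := rpow_nonneg (by linarith) _
  have h3 := smoothTransition.nonneg ((n:ℝ) + 1 - x)
  have h4 := deriv_smoothTransition_nonneg ((n:ℝ) + 1 - x)
  have : 0 ≤ (1 - κ) * (1 + x) ^ (κ - 2) * smoothTransition (n + 1 - x) :=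
    mul_nonneg (mul_nonneg (by linarith) h1) h3
  have := mul_nonneg h2 h4
  unfold psi'
  linarith

lemma psi_mono {n' : ℕ} (hn : n ≤ n') (hx : 0 ≤ x) : psi κ n x ≤ psi κ n' x := by
  refine mul_le_mul_of_nonneg_left (smoothTransition.monotone ?_) (rpow_nonneg (by linarith) _)
  have : (n:ℝ) ≤ n' := by exact_mod_cast hn
  linarith

lemma cut_mono {n' : ℕ} (hn : n ≤ n') (hx : 0 ≤ x) : cut n x ≤ cut n' x := by
  refine smoothTransition.monotone ?_
  have : (n:ℝ) ≤ n' := by exact_mod_cast hn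
  have := mul_le_mul_of_nonneg_right this hx
  linarith
end

/-- The weighted functional `∫ r (1 + t + r) ^ (κ - 1) q(r, t) dr`, truncated near `r = 0` and near
infinity; it increases with `n`. -/
def M (κ : ℝ) (n : ℕ) (t : ℝ) : ℝ :=
  ∫ r in (1 / (n:ℝ))..(n + 1), cut n r * (r * psi κ n (t + r) * W.q r t)

lemma cMint (hp : 1 < p) (κ : ℝ) (n : ℕ) {t : ℝ} (ht : 0 ≤ t) :
    ContinuousOn (fun r => cut n r * (r * psi κ n (t + r) * W.q r t)) (Ioi 0) := by
  have h1 : ContinuousOn (fun r => W.q r t) (Ioi 0) :=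
    (W.cq hp).comp (f := fun r => (r, t)) (by fun_prop) (fun r hr => hr)
  have h2 : ContinuousOn (fun r => psi κ n (t + r)) (Ioi 0) := by
    refine ContinuousOn.comp (g := psi κ n) (t := Ici 0)
      (fun x hx => (dpsi hx).continuousAt.continuousWithinAt) (by fun_prop) ?_
    intro r hr
    exact add_nonneg ht (le_of_lt hr)
  exact (ccut n).continuousOn.mul ((continuousOn_id.mul h2).mul h1)

lemma n_facts {n : ℕ} (hn : 1 ≤ n) : 0 < 1 / (n:ℝ) ∧ 1 / (n:ℝ) ≤ n + 1 ∧ 2 / (n:ℝ) ≤ n + 1 := by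
  have h : (1:ℝ) ≤ n := by exact_mod_cast hn
  refine ⟨by positivity, ?_, ?_⟩
  · rw [div_le_iff₀ (by positivity)]; nlinarith
  · rw [div_le_iff₀ (by positivity)]; nlinarith

lemma Mint_nonneg (hp : 1 < p) (hm : 0 < m) (κ : ℝ) (n : ℕ) {t r : ℝ} (ht : 0 ≤ t) (hr : 0 < r) :
    0 ≤ cut n r * (r * psi κ n (t + r) * W.q r t) :=
  mul_nonneg (cut_nonneg _ _) (mul_nonneg (mul_nonneg hr.le (psi_nonneg (by positivity)))
    (W.q_nonneg hp hm hr))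

lemma M_nonneg (hp : 1 < p) (hm : 0 < m) (κ : ℝ) {n : ℕ} (hn : 1 ≤ n) {t : ℝ} (ht : 0 ≤ t) :
    0 ≤ W.M κ n t := by
  obtain ⟨h1, h2, -⟩ := n_facts hn
  exact intervalIntegral.integral_nonneg h2 fun r hr =>
    W.Mint_nonneg hp hm κ n ht (h1.trans_le hr.1)

lemma M_ii (hp : 1 < p) (κ : ℝ) (n : ℕ) {t a b : ℝ} (ht : 0 ≤ t) (ha : 0 < a) (hab : a ≤ b) :
    IntervalIntegrable (fun r => cut n r * (r * psi κ n (t + r) * W.q r t)) volume a b :=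
  ContinuousOn.intervalIntegrable (by
    rw [uIcc_of_le hab]
    exact (W.cMint hp κ n ht).mono fun x hx => ha.trans_le hx.1)

lemma M_mono (hp : 1 < p) (hm : 0 < m) (κ : ℝ) {n n' : ℕ} (hn : 1 ≤ n) (hnn : n ≤ n') {t : ℝ}
    (ht : 0 ≤ t) : W.M κ n t ≤ W.M κ n' t := by
  obtain ⟨h1, h2, -⟩ := n_facts hn
  obtain ⟨h1', h2', -⟩ := n_facts (hn.trans hnn)
  have hc : (n:ℝ) ≤ n' := by exact_mod_cast hnn
  have hn0 : (0:ℝ) < n := by exact_mod_cast hn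
  have h3 : 1 / (n':ℝ) ≤ 1 / n := by gcongr
  calc W.M κ n t ≤ ∫ r in (1 / (n:ℝ))..(n + 1), cut n' r * (r * psi κ n' (t + r) * W.q r t) := by
        refine intervalIntegral.integral_mono_on h2 (W.M_ii hp κ n ht h1 h2)
          (W.M_ii hp κ n' ht h1 h2) fun r hr => ?_
        have h0 : 0 < r := h1.trans_le hr.1
        have hq := W.q_nonneg (t := t) hp hm h0
        have hψ : 0 ≤ psi κ n (t + r) := psi_nonneg (by positivity)
        have hψ' : psi κ n (t + r) ≤ psi κ n' (t + r) := psi_mono hnn (by positivity)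
        exact mul_le_mul (cut_mono hnn h0.le) (by gcongr) (by positivity) (cut_nonneg _ _)
    _ ≤ W.M κ n' t := by
        refine intervalIntegral.integral_mono_interval h3 h2 (by linarith) ?_
          (W.M_ii hp κ n' ht h1' h2')
        rw [EventuallyLE, ae_restrict_iff' measurableSet_Ioc]
        exact ae_of_all _ fun r hr => W.Mint_nonneg hp hm κ n' ht (h1'.trans hr.1)

/-- The initial value of the functional is bounded by the weighted norm of the data, uniformly in `n`. -/
lemma M_zero_le (hp : 1 < p) (hm : 0 < m) {κ B : ℝ} (hκ : κ ≤ 1)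
    (hB : ∀ ε R, 0 < ε → ε ≤ R → ∫ r in ε..R, r ^ κ * W.q r 0 ≤ B) {n : ℕ} (hn : 1 ≤ n) :
    W.M κ n 0 ≤ B := by
  obtain ⟨h1, h2, -⟩ := n_facts hn
  refine le_trans (intervalIntegral.integral_mono_on h2 (W.M_ii hp κ n le_rfl h1 h2) ?_ ?_)
    (hB _ _ h1 h2)
  · refine ContinuousOn.intervalIntegrable ?_
    rw [uIcc_of_le h2]
    have hne : ∀ x ∈ Icc (1 / (n:ℝ)) (n + 1), 0 < x := fun x hx => h1.trans_le hx.1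
    exact (continuousOn_id.rpow_const fun x hx => Or.inl (hne x hx).ne').mul
      ((W.cq hp).comp (f := fun r => (r, (0:ℝ))) (by fun_prop) hne)
  · intro r hr
    have h0 : 0 < r := h1.trans_le hr.1
    have hq := W.q_nonneg (t := 0) hp hm h0
    have e1 : r * psi κ n (0 + r) ≤ r ^ κ := by
      have : psi κ n (0 + r) ≤ r ^ (κ - 1) := (psi_le (by positivity)).trans
        (rpow_le_rpow_of_nonpos h0 (by linarith) (by linarith))
      calc r * psi κ n (0 + r) ≤ r * r ^ (κ - 1) := by gcongr
        _ = r ^ κ := by rw [rpow_sub_one h0.ne']; field_simp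
    have hψ : 0 ≤ psi κ n (0 + r) := psi_nonneg (by positivity)
    exact (mul_le_of_le_one_left (by positivity) (cut_le _ _)).trans (by gcongr)

section
variable {W} {E₀ : ℝ} (hp : 1 < p) (hm : 0 < m) (F : W.FE E₀)
include hp hm F

lemma FE.cPt {r : ℝ} (hr : 0 < r) : Continuous (fun t => W.P r t) :=
  continuous_iff_continuousAt.2 fun t => (F.dP_t hp hm hr t).continuousAt

/-- The error terms of the truncation near the origin vanish in the limit. -/
lemma FE.int_P_tendsto (t₁ t₂ : ℝ) :
    Tendsto (fun n : ℕ => ∫ t in t₁..t₂, W.P (2 / n) t) atTop (nhds 0) := by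
  have h := intervalIntegral.tendsto_integral_filter_of_dominated_convergence (a := t₁) (b := t₂)
    (μ := volume) (l := atTop) (F := fun (n : ℕ) t => W.P (2 / n) t) (f := fun _ => 0) (fun _ => E₀)
    (by
      filter_upwards [eventually_ge_atTop 1] with n hn
      have hn0 : (0:ℝ) < n := by exact_mod_cast hn
      exact (F.cPt hp hm (by positivity)).aestronglyMeasurable)
    (by
      filter_upwards [] with n
      refine ae_of_all _ fun t _ => ?_
      rw [Real.norm_eq_abs, abs_of_nonneg (F.P_nonneg hp hm (by positivity) t)]
      exact F.P_le hp hm (by positivity) t)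
    intervalIntegrable_const (ae_of_all _ fun t _ => F.P_tendsto_zero t)
  simpa using h

/-- Two instances of `weighted_flux` for the truncated functional. With `a = 0` and `K = 1` it is almost
nonincreasing. With `a` a cut-off to `t - r ≥ s` and `K = (1 + 2t) ^ (1 - κ)`, its decrease from time
`s` to time `t` controls the energy in the ball of radius `t - 2s` at time `t`. -/
lemma FE.M_est (hal : 2 ≤ al + (p - 1) / 2) {κ : ℝ} (hκ : κ ≤ 1) : ∃ C, 0 ≤ C ∧
    (∀ n : ℕ, 1 ≤ n → ∀ t₁ t₂, 0 ≤ t₁ → t₁ ≤ t₂ →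
      W.M κ n t₂ ≤ W.M κ n t₁ + C * 2 * ∫ t in t₁..t₂, W.P (2 / n) t) ∧
    (∀ n : ℕ, 1 ≤ n → ∀ s t : ℝ, 0 < s → 2 * s < t → 2 * t ≤ n → 2 / (n:ℝ) ≤ t - 2 * s →
      s / 2 * W.P (t - 2 * s) t ≤ (1 + 2 * t) ^ (1 - κ) * (W.M κ n s - W.M κ n t)
        + C * (1 + (1 + 2 * t) ^ (1 - κ)) * ∫ t in s..t, W.P (2 / n) t) := by
  obtain ⟨C, hC0, hC⟩ := W.weighted_flux hp hm F hal
  refine ⟨C, hC0, ?_, ?_⟩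
  · intro n hn t₁ t₂ h0 h12
    obtain ⟨-, -, h3⟩ := n_facts hn
    have := hC n (fun _ => 0) (fun _ => 0) (psi κ n) (psi' κ n) 1 (n + 1) t₁ t₂ hn zero_le_one h3 h0
      h12 (fun x => hasDerivAt_const _ _) continuous_const (fun _ => le_rfl) (fun _ => zero_le_one)
      (fun x hx => dpsi hx) cpsi' (fun x hx => psi_nonneg hx) (fun x hx => psi_le_one hκ hx)
      (fun x hx => psi'_nonpos hκ hx) (fun _ _ => rfl)
      (fun t ht => by
        have : smoothTransition (n + 1 - (t + (n + 1))) = 0 :=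
          smoothTransition.zero_of_nonpos (by linarith [ht.1])
        rw [psi, this, mul_zero])
      (fun t ht r hr => by
        have := psi_nonneg (κ := κ) (n := n) (x := t + r) (by linarith [ht.1])
        linarith)
    simp only [zero_mul, zero_add, one_mul] at this
    rw [one_add_one_eq_two] at this
    exact this
  · intro n hn s t hs hst htn hn2
    obtain ⟨h1, h2, h3⟩ := n_facts hn
    have ht0 : 0 < t := by linarith
    have hn0 : (0:ℝ) < n := by exact_mod_cast hn
    set K := (1 + 2 * t) ^ (1 - κ) with hK
    have hK0 : 0 < K := rpow_pos_of_pos (by linarith) _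
    have hKi : K * (1 + 2 * t) ^ (κ - 1) = 1 := by
      rw [hK, ← rpow_add (by linarith)]; simp
    -- `a` vanishes for `x ≤ s` and equals `1` for `x ≥ 3 s / 2`.
    let a : ℝ → ℝ := fun x => smoothTransition (2 / s * (x - s))
    let a' : ℝ → ℝ := fun x => deriv smoothTransition (2 / s * (x - s)) * (2 / s)
    have ha : ∀ x, HasDerivAt a (a' x) x := fun x => by
      have := (hasDerivAt_smoothTransition (2 / s * (x - s))).comp x
        (((hasDerivAt_id x).sub_const s).const_mul (2 / s))
      exact HasDerivAt.congr_deriv this (by simp [a'])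
    have ca' : Continuous a' :=
      (continuous_deriv_smoothTransition.comp (by fun_prop)).mul continuous_const
    have az : ∀ x, x ≤ s → a x = 0 := fun x hx => smoothTransition.zero_of_nonpos
      (mul_nonpos_of_nonneg_of_nonpos (by positivity) (by linarith))
    have a1 : ∀ x, 3 * s / 2 ≤ x → a x = 1 := fun x hx => smoothTransition.one_of_one_le (by
      rw [div_mul_eq_mul_div, le_div_iff₀ hs]; linarith)
    have ca : Continuous a := continuous_iff_continuousAt.2 fun x => (ha x).continuousAt
    have key := hC n a a' (psi κ n) (psi' κ n) K (n + 1) s t hn hK0.le h3 hs.le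
      (by linarith) ha ca' (fun _ => smoothTransition.nonneg _) (fun _ => smoothTransition.le_one _)
      (fun x hx => dpsi hx) cpsi' (fun x hx => psi_nonneg hx) (fun x hx => psi_le_one hκ hx)
      (fun x hx => psi'_nonpos hκ hx) (fun τ hτ => az _ (by linarith [hτ.2]))
      (fun τ hτ => by
        have : smoothTransition (n + 1 - (τ + (n + 1))) = 0 :=
          smoothTransition.zero_of_nonpos (by linarith [hτ.1])
        rw [psi, this, mul_zero])
      (fun τ hτ r hr => by
        by_cases h : τ - r ≤ s
        · rw [az _ h]
          exact mul_nonneg hK0.le (psi_nonneg (by linarith [hτ.1]))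
        · push Not at h
          refine (smoothTransition.le_one _).trans ?_
          have e : smoothTransition ((n:ℝ) + 1 - (τ + r)) = 1 :=
            smoothTransition.one_of_one_le (by linarith [hτ.2])
          rw [psi, e, mul_one]
          refine hKi.symm.le.trans ?_
          refine mul_le_mul_of_nonneg_left ?_ hK0.le
          have hx0 : 0 < 1 + (τ + r) := by linarith [hτ.1]
          exact rpow_le_rpow_of_nonpos hx0 (by linarith [hτ.2]) (by linarith))
    have cPr : ∀ τ, ContinuousOn (fun r => cut n r * (a (τ - r) * W.P r τ)) (Ioi 0) := fun τ =>
      (ccut n).continuousOn.mul ((ca.comp (by fun_prop)).continuousOn.mul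
        ((F.cP hp hm).comp (f := fun r => (r, τ)) (by fun_prop) (fun r hr => hr)))
    have split : ∀ τ, 0 ≤ τ → ∫ r in (1 / (n:ℝ))..(n + 1),
        cut n r * (a (τ - r) * W.P r τ + K * (r * psi κ n (τ + r) * W.q r τ))
        = (∫ r in (1 / (n:ℝ))..(n + 1), cut n r * (a (τ - r) * W.P r τ)) + K * W.M κ n τ := by
      intro τ hτ
      rw [M, ← intervalIntegral.integral_const_mul, ← intervalIntegral.integral_add]
      · refine intervalIntegral.integral_congr fun r _ => ?_
        ring
      · refine ContinuousOn.intervalIntegrable ?_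
        rw [uIcc_of_le h2]
        exact (cPr τ).mono fun x hx => h1.trans_le hx.1
      · exact (W.M_ii hp κ n hτ h1 h2).const_mul K
    rw [split t ht0.le, split s hs.le] at key
    have z : ∫ r in (1 / (n:ℝ))..(n + 1), cut n r * (a (s - r) * W.P r s) = 0 := by
      rw [← intervalIntegral.integral_zero (μ := volume) (a := 1 / (n:ℝ)) (b := n + 1)]
      refine intervalIntegral.integral_congr fun r hr => ?_
      rw [uIcc_of_le h2] at hr
      show cut n r * (a (s - r) * W.P r s) = 0
      rw [az _ (by linarith [hr.1]), zero_mul, mul_zero]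
    rw [z, zero_add] at key
    -- `a(t - r) = 1` on `[t - 2s, t - 3s/2]`, an interval of length `s / 2` on which `P` is at least
    -- `P(t - 2s, t)`.
    have low : s / 2 * W.P (t - 2 * s) t
        ≤ ∫ r in (1 / (n:ℝ))..(n + 1), cut n r * (a (t - r) * W.P r t) := by
      have h12 : 1 / (n:ℝ) ≤ 2 / n := by gcongr; norm_num
      have hl : t - 2 * s ≤ t - 3 * s / 2 := by linarith
      have hpos : 0 < t - 2 * s := by linarith
      calc s / 2 * W.P (t - 2 * s) t = ∫ r in (t - 2 * s)..(t - 3 * s / 2), W.P (t - 2 * s) t := by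
            rw [intervalIntegral.integral_const, smul_eq_mul]; ring
        _ ≤ ∫ r in (t - 2 * s)..(t - 3 * s / 2), cut n r * (a (t - r) * W.P r t) := by
            refine intervalIntegral.integral_mono_on hl intervalIntegrable_const ?_ fun r hr => ?_
            · refine ContinuousOn.intervalIntegrable ?_
              rw [uIcc_of_le hl]
              exact (cPr t).mono fun x hx => hpos.trans_le hx.1
            · have c1 : cut n r = 1 := smoothTransition.one_of_one_le (by
                have := (div_le_iff₀ hn0).1 (hn2.trans hr.1)
                linarith)
              rw [c1, a1 _ (by linarith [hr.2]), one_mul, one_mul]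
              exact F.P_mono hp hm hpos.le hr.1 t
        _ ≤ _ := by
            refine intervalIntegral.integral_mono_interval (h12.trans hn2) hl (by linarith) ?_ ?_
            · rw [EventuallyLE, ae_restrict_iff' measurableSet_Ioc]
              exact ae_of_all _ fun r hr => mul_nonneg (cut_nonneg _ _)
                (mul_nonneg (smoothTransition.nonneg _) (F.P_nonneg hp hm (h1.trans hr.1).le t))
            · refine ContinuousOn.intervalIntegrable ?_
              rw [uIcc_of_le h2]
              exact (cPr t).mono fun x hx => h1.trans_le hx.1
    linarith

/-- Decay of the interior energy: letting the truncations go to zero, the functional has a nonincreasing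
nonnegative limit `Mi`, and `s = c t ^ (1 - κ) / 2` in the estimate of `FE.M_est` gives
`P ≤ (12 / c) (Mi s - Mi t) → 0`. -/
theorem FE.P_decay (hal : 2 ≤ al + (p - 1) / 2) {κ B : ℝ} (hκ0 : 0 < κ) (hκ1 : κ < 1)
    (hB : ∀ ε R, 0 < ε → ε ≤ R → ∫ r in ε..R, r ^ κ * W.q r 0 ≤ B) {c : ℝ} (hc : 0 < c) :
    Tendsto (fun t => W.P (t - c * t ^ (1 - κ)) t) atTop (nhds 0) := by
  obtain ⟨C, hC0, h1, h2⟩ := F.M_est hp hm hal hκ1.le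
  have hE := F.E_nonneg hp hm
  have inj : Tendsto (fun j : ℕ => j + 1) atTop atTop := tendsto_add_atTop_nat 1
  have err : ∀ t₁ t₂, Tendsto (fun j : ℕ => ∫ t in t₁..t₂, W.P (2 / ((j + 1 : ℕ) : ℝ)) t)
      atTop (nhds 0) := fun t₁ t₂ => (F.int_P_tendsto hp hm t₁ t₂).comp inj
  have bdd : ∀ t, 0 ≤ t → BddAbove (range fun j : ℕ => W.M κ (j + 1) t) := by
    intro t ht
    refine ⟨B + C * 2 * (E₀ * t), ?_⟩
    rintro _ ⟨j, rfl⟩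
    have a1 := h1 (j + 1) (by omega) 0 t le_rfl ht
    have a2 := W.M_zero_le hp hm hκ1.le hB (n := j + 1) (by omega)
    have a3 : ∫ τ in (0:ℝ)..t, W.P (2 / ((j + 1 : ℕ) : ℝ)) τ ≤ E₀ * t := by
      have : ∫ τ in (0:ℝ)..t, W.P (2 / ((j + 1 : ℕ) : ℝ)) τ ≤ ∫ τ in (0:ℝ)..t, E₀ :=
        intervalIntegral.integral_mono_on ht
          ((F.cPt hp hm (by positivity)).intervalIntegrable _ _) intervalIntegrable_const
          fun τ _ => F.P_le hp hm (by positivity) τ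
      simpa [mul_comm] using this
    have a4 : C * 2 * ∫ τ in (0:ℝ)..t, W.P (2 / ((j + 1 : ℕ) : ℝ)) τ ≤ C * 2 * (E₀ * t) := by
      gcongr
    show W.M κ (j + 1) t ≤ _
    linarith
  -- The truncated functionals increase with `n`, so the supremum is their limit.
  let Mi : ℝ → ℝ := fun t => ⨆ j : ℕ, W.M κ (j + 1) t
  have lim : ∀ t, 0 ≤ t → Tendsto (fun j : ℕ => W.M κ (j + 1) t) atTop (nhds (Mi t)) :=
    fun t ht => tendsto_atTop_ciSup
      (fun i j hij => W.M_mono hp hm κ (by omega) (by omega) ht) (bdd t ht)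
  have anti : ∀ t₁ t₂, 0 ≤ t₁ → t₁ ≤ t₂ → Mi t₂ ≤ Mi t₁ := by
    intro t₁ t₂ h0 h12
    have l2 := (lim t₁ h0).add ((err t₁ t₂).const_mul (C * 2))
    rw [mul_zero, add_zero] at l2
    exact le_of_tendsto_of_tendsto' (lim t₂ (h0.trans h12)) l2
      fun j => h1 (j + 1) (by omega) t₁ t₂ h0 h12
  have nonneg : ∀ t, 0 ≤ t → 0 ≤ Mi t := fun t ht =>
    ge_of_tendsto' (lim t ht) fun j => W.M_nonneg hp hm κ (by omega) ht
  have est : ∀ s t, 0 < s → 2 * s < t →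
      s / 2 * W.P (t - 2 * s) t ≤ (1 + 2 * t) ^ (1 - κ) * (Mi s - Mi t) := by
    intro s t hs hst
    have l2 := (((lim s hs.le).sub (lim t (by linarith))).const_mul ((1 + 2 * t) ^ (1 - κ))).add
      ((err s t).const_mul (C * (1 + (1 + 2 * t) ^ (1 - κ))))
    rw [mul_zero, add_zero] at l2
    refine ge_of_tendsto l2 ?_
    have e1 : ∀ᶠ j : ℕ in atTop, 2 / ((j + 1 : ℕ) : ℝ) < t - 2 * s :=
      ((tendsto_const_div_atTop_nhds_zero_nat (2:ℝ)).comp inj).eventually_lt_const (by linarith)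
    have e2 : ∀ᶠ j : ℕ in atTop, 2 * t ≤ ((j + 1 : ℕ) : ℝ) :=
      (tendsto_natCast_atTop_atTop.comp inj).eventually_ge_atTop _
    filter_upwards [e1, e2] with j f1 f2
    exact h2 (j + 1) (by omega) s t hs hst f2 f1.le
  obtain ⟨L, hL⟩ : ∃ L, Tendsto Mi atTop (nhds L) := by
    refine ⟨⨅ t, Mi (max t 0), ?_⟩
    have := tendsto_atTop_ciInf (f := fun t => Mi (max t 0))
      (fun x y hxy => anti _ _ (le_max_right _ _) (max_le_max hxy le_rfl))
      ⟨0, by rintro _ ⟨t, rfl⟩; exact nonneg _ (le_max_right _ _)⟩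
    refine this.congr' ?_
    filter_upwards [eventually_ge_atTop 0] with t ht
    rw [max_eq_left ht]
  have hs : Tendsto (fun t : ℝ => c * t ^ (1 - κ) / 2) atTop atTop :=
    ((tendsto_rpow_atTop (by linarith)).const_mul_atTop hc).atTop_div_const (by norm_num)
  have hlt : ∀ᶠ t : ℝ in atTop, c * t ^ (1 - κ) < t := by
    have := (tendsto_rpow_atTop hκ0).eventually_gt_atTop c
    filter_upwards [this, eventually_gt_atTop 0] with t h1 h0
    calc c * t ^ (1 - κ) < t ^ κ * t ^ (1 - κ) := by
          have := rpow_pos_of_pos h0 (1 - κ)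
          gcongr
      _ = t := by rw [← rpow_add h0]; simp
  have up : Tendsto (fun t : ℝ => 12 / c * (Mi (c * t ^ (1 - κ) / 2) - Mi t)) atTop (nhds 0) := by
    have := ((hL.comp hs).sub hL).const_mul (12 / c)
    rw [sub_self, mul_zero] at this
    exact this
  refine tendsto_of_tendsto_of_tendsto_of_le_of_le' tendsto_const_nhds up ?_ ?_
  · filter_upwards [hlt] with t ht
    exact F.P_nonneg hp hm (by linarith) t
  · filter_upwards [hlt, eventually_ge_atTop 1] with t ht ht1
    have h0 : 0 < t := by linarith
    have hpw := rpow_pos_of_pos h0 (1 - κ)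
    have e := est (c * t ^ (1 - κ) / 2) t (by positivity) (by linarith)
    have e2 : (1 + 2 * t) ^ (1 - κ) ≤ 3 * t ^ (1 - κ) := by
      calc (1 + 2 * t) ^ (1 - κ) ≤ (3 * t) ^ (1 - κ) :=
            rpow_le_rpow (by linarith) (by linarith) (by linarith)
        _ = 3 ^ (1 - κ) * t ^ (1 - κ) := mul_rpow (by norm_num) h0.le
        _ ≤ 3 * t ^ (1 - κ) := by
            gcongr
            calc (3:ℝ) ^ (1 - κ) ≤ 3 ^ (1:ℝ) :=
                  rpow_le_rpow_of_exponent_le (by norm_num) (by linarith)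
              _ = 3 := rpow_one _
    have e3 : 0 ≤ Mi (c * t ^ (1 - κ) / 2) - Mi t :=
      sub_nonneg.2 (anti _ _ (by positivity) (by linarith))
    have e4 : t - 2 * (c * t ^ (1 - κ) / 2) = t - c * t ^ (1 - κ) := by ring
    rw [e4] at e
    have e5 := e.trans (mul_le_mul_of_nonneg_right e2 e3)
    have e6 : c * t ^ (1 - κ) / 2 / 2 * (12 / c * (Mi (c * t ^ (1 - κ) / 2) - Mi t))
      = 3 * t ^ (1 - κ) * (Mi (c * t ^ (1 - κ) / 2) - Mi t) := by field_simp; ring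
    rw [← e6] at e5
    exact le_of_mul_le_mul_left e5 (by positivity)
end
end RadialWave

/-! ### Calculus of radial functions -/

section HalfPlane
variable {G : ℝ × ℝ → ℝ}

lemma isOpen_halfPlane : IsOpen {q : ℝ × ℝ | 0 < q.1} := isOpen_lt continuous_const continuous_fst

lemma halfPlane_partial_r (hG : ContDiffOn ℝ 1 G {q : ℝ × ℝ | 0 < q.1}) {r t : ℝ} (hr : 0 < r) :
    HasDerivAt (fun r => G (r, t)) (fderiv ℝ G (r, t) (1, 0)) r := by
  have h := ((hG.contDiffAt (isOpen_halfPlane.mem_nhds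
    (show (r, t) ∈ {q : ℝ × ℝ | 0 < q.1} from hr))).differentiableAt (by norm_num)).hasFDerivAt
  exact h.comp_hasDerivAt r ((hasDerivAt_id r).prodMk (hasDerivAt_const r t))

lemma halfPlane_partial_t (hG : ContDiffOn ℝ 1 G {q : ℝ × ℝ | 0 < q.1}) {r t : ℝ} (hr : 0 < r) :
    HasDerivAt (fun t => G (r, t)) (fderiv ℝ G (r, t) (0, 1)) t := by
  have h := ((hG.contDiffAt (isOpen_halfPlane.mem_nhds
    (show (r, t) ∈ {q : ℝ × ℝ | 0 < q.1} from hr))).differentiableAt (by norm_num)).hasFDerivAt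
  exact h.comp_hasDerivAt t ((hasDerivAt_const t r).prodMk (hasDerivAt_id t))

lemma halfPlane_fderiv {n k : ℕ∞} (hG : ContDiffOn ℝ n G {q : ℝ × ℝ | 0 < q.1})
    (hk : (k : WithTop ℕ∞) + 1 ≤ n) (v : ℝ × ℝ) :
    ContDiffOn ℝ k (fun q => fderiv ℝ G q v) {q : ℝ × ℝ | 0 < q.1} :=
  (hG.fderiv_of_isOpen isOpen_halfPlane hk).clm_apply contDiffOn_const

lemma halfPlane_symm (hG : ContDiffOn ℝ 2 G {q : ℝ × ℝ | 0 < q.1}) {q : ℝ × ℝ} (hq : 0 < q.1)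
    (v w : ℝ × ℝ) :
    fderiv ℝ (fun q => fderiv ℝ G q v) q w = fderiv ℝ (fun q => fderiv ℝ G q w) q v := by
  have hc := hG.contDiffAt (isOpen_halfPlane.mem_nhds hq)
  have hs : IsSymmSndFDerivAt ℝ G q := hc.isSymmSndFDerivAt (by simp)
  have hd : DifferentiableAt ℝ (fderiv ℝ G) q :=
    ((hG.fderiv_of_isOpen (m := 1) isOpen_halfPlane (by norm_num)).contDiffAt
      (isOpen_halfPlane.mem_nhds hq)).differentiableAt (by norm_num)
  rw [fderiv_clm_apply hd (differentiableAt_const v), fderiv_clm_apply hd (differentiableAt_const w)]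
  simpa using hs w v
end HalfPlane

section Radial
variable {d : ℕ}

lemma hasFDerivAt_norm_euclid {x : EuclideanSpace ℝ (Fin d)} (hx : x ≠ 0) :
    HasFDerivAt (fun y : EuclideanSpace ℝ (Fin d) => ‖y‖) (‖x‖⁻¹ • innerSL ℝ x) x := by
  have hn : 0 < ‖x‖ := norm_pos_iff.2 hx
  have h := (hasStrictFDerivAt_norm_sq x).hasFDerivAt.sqrt (by positivity)
  have e : (fun y : EuclideanSpace ℝ (Fin d) => ‖y‖) = fun y => √(‖y‖ ^ 2) := by
    funext y; rw [sqrt_sq (norm_nonneg y)]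
  rw [e]
  refine h.congr_fderiv ?_
  rw [sqrt_sq hn.le]
  ext v
  simp
  field_simp

lemma hasFDerivAt_radial {f : EuclideanSpace ℝ (Fin d) → ℝ} {φ : ℝ → ℝ} {c : ℝ}
    (hf : ∀ y, y ≠ 0 → f y = φ ‖y‖) {x : EuclideanSpace ℝ (Fin d)} (hx : x ≠ 0)
    (hφ : HasDerivAt φ c ‖x‖) : HasFDerivAt f ((c * ‖x‖⁻¹) • innerSL ℝ x) x := by
  have h := hφ.comp_hasFDerivAt x (hasFDerivAt_norm_euclid hx)
  rw [smul_smul] at h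
  refine h.congr_of_eventuallyEq ?_
  filter_upwards [isOpen_ne.mem_nhds hx] with y hy using hf y hy

lemma norm_gradient_radial {f : EuclideanSpace ℝ (Fin d) → ℝ} {φ : ℝ → ℝ} {c : ℝ}
    (hf : ∀ y, y ≠ 0 → f y = φ ‖y‖) {x : EuclideanSpace ℝ (Fin d)} (hx : x ≠ 0)
    (hφ : HasDerivAt φ c ‖x‖) : ‖gradient f x‖ = |c| := by
  have hn : ‖x‖ ≠ 0 := norm_ne_zero_iff.2 hx
  rw [gradient, LinearIsometryEquiv.norm_map, (hasFDerivAt_radial hf hx hφ).fderiv, norm_smul,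
    innerSL_apply_norm, norm_mul, norm_inv, norm_norm, Real.norm_eq_abs]
  field_simp

/-- The Laplacian of `f = φ(|x|)` is `φ'' + (d - 1) φ' / r`; here `c = φ''(|x|)`. -/
lemma lap_radial {f : EuclideanSpace ℝ (Fin d) → ℝ} {φ φ' : ℝ → ℝ} {c : ℝ}
    (hf : ∀ y, y ≠ 0 → f y = φ ‖y‖) {x : EuclideanSpace ℝ (Fin d)} (hx : x ≠ 0)
    (hφ : ∀ r, 0 < r → HasDerivAt φ (φ' r) r) (hφ' : HasDerivAt φ' c ‖x‖) :
    lap f x = c + ((d:ℝ) - 1) * φ' ‖x‖ / ‖x‖ := by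
  have hn : 0 < ‖x‖ := norm_pos_iff.2 hx
  have h1 : ∀ i : Fin d, fderiv ℝ (fun y => fderiv ℝ f y (EuclideanSpace.single i 1)) x
      (EuclideanSpace.single i 1)
      = (c / ‖x‖ - φ' ‖x‖ / ‖x‖ ^ 2) * ‖x‖⁻¹ * x i ^ 2 + φ' ‖x‖ / ‖x‖ := by
    intro i
    have hψ : HasDerivAt (fun r => φ' r * r⁻¹) (c / ‖x‖ - φ' ‖x‖ / ‖x‖ ^ 2) ‖x‖ :=
      (hφ'.mul (hasDerivAt_inv hn.ne')).congr_deriv (by field_simp; ring)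
    have hcoord : HasFDerivAt (fun y : EuclideanSpace ℝ (Fin d) => y i)
        (EuclideanSpace.proj i : EuclideanSpace ℝ (Fin d) →L[ℝ] ℝ) x :=
      (EuclideanSpace.proj i : EuclideanSpace ℝ (Fin d) →L[ℝ] ℝ).hasFDerivAt
    have hr := hasFDerivAt_radial (f := fun y : EuclideanSpace ℝ (Fin d) => φ' ‖y‖ * ‖y‖⁻¹)
      (φ := fun r => φ' r * r⁻¹) (fun y _ => rfl) hx hψ
    have hm := hr.mul hcoord
    have he : (fun y => fderiv ℝ f y (EuclideanSpace.single i 1))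
        =ᶠ[nhds x] fun y => (φ' ‖y‖ * ‖y‖⁻¹) * y i := by
      filter_upwards [isOpen_ne.mem_nhds hx] with y hy
      rw [(hasFDerivAt_radial hf hy (hφ _ (norm_pos_iff.2 hy))).fderiv]
      simp [EuclideanSpace.inner_single_right]
    rw [(hm.congr_of_eventuallyEq he).fderiv]
    simp [EuclideanSpace.inner_single_right]
    field_simp
    ring
  rw [lap, Finset.sum_congr rfl fun i _ => h1 i, Finset.sum_add_distrib, ← Finset.mul_sum,
    ← EuclideanSpace.real_norm_sq_eq]
  simp
  field_simp
  ring
end Radial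

/-! ### The radial profile and the conjugated wave -/

/-- A classical solution `F(r, t)` on `r > 0` of the radial equation
`F_tt = F_rr + (D - 1) F_r / r - a F / r² - |F| ^ (p - 1) F`, together with its partial derivatives,
in the conventions of `RadialWave`. -/
structure Profile (D a p : ℝ) where
  F : ℝ → ℝ → ℝ
  Ft : ℝ → ℝ → ℝ
  Fr : ℝ → ℝ → ℝ
  Ftt : ℝ → ℝ → ℝ
  Ftr : ℝ → ℝ → ℝ
  Frr : ℝ → ℝ → ℝ
  cF : ContinuousOn (fun q : ℝ × ℝ => F q.1 q.2) {q | 0 < q.1}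
  cFt : ContinuousOn (fun q : ℝ × ℝ => Ft q.1 q.2) {q | 0 < q.1}
  cFr : ContinuousOn (fun q : ℝ × ℝ => Fr q.1 q.2) {q | 0 < q.1}
  cFtt : ContinuousOn (fun q : ℝ × ℝ => Ftt q.1 q.2) {q | 0 < q.1}
  cFtr : ContinuousOn (fun q : ℝ × ℝ => Ftr q.1 q.2) {q | 0 < q.1}
  cFrr : ContinuousOn (fun q : ℝ × ℝ => Frr q.1 q.2) {q | 0 < q.1}
  dF_t : ∀ r t, 0 < r → HasDerivAt (fun t => F r t) (Ft r t) t
  dF_r : ∀ r t, 0 < r → HasDerivAt (fun r => F r t) (Fr r t) r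
  dFt_t : ∀ r t, 0 < r → HasDerivAt (fun t => Ft r t) (Ftt r t) t
  dFt_r : ∀ r t, 0 < r → HasDerivAt (fun r => Ft r t) (Ftr r t) r
  dFr_t : ∀ r t, 0 < r → HasDerivAt (fun t => Fr r t) (Ftr r t) t
  dFr_r : ∀ r t, 0 < r → HasDerivAt (fun r => Fr r t) (Frr r t) r
  eqn : ∀ r t, 0 < r → Ftt r t = Frr r t + (D - 1) * Fr r t / r - a * F r t / r ^ 2
    - |F r t| ^ (p - 1) * F r t

/-- A radial solution restricted to a ray from the origin, with the derivatives that occur in the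
energy. Only points `x ≠ 0` are described, where `u` is differentiable. -/
lemma Sol.exists_profile {d : ℕ} {a p : ℝ} (hd : 3 ≤ d) (S : Sol d a p) :
    ∃ Q : Profile (d : ℝ) a p, ∀ x t, x ≠ 0 → S.u x t = Q.F ‖x‖ t ∧
      ‖gradient (fun y => S.u y t) x‖ = |Q.Fr ‖x‖ t| ∧ deriv (S.u x) t = Q.Ft ‖x‖ t := by
  obtain ⟨e, he⟩ : ∃ e : EuclideanSpace ℝ (Fin d), ‖e‖ = 1 :=
    ⟨EuclideanSpace.single ⟨0, by omega⟩ 1, by simp⟩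
  let G : ℝ × ℝ → ℝ := fun q => S.u (q.1 • e) q.2
  have hG : ContDiffOn ℝ 2 G {q : ℝ × ℝ | 0 < q.1} := by
    refine S.smooth.comp (f := fun q : ℝ × ℝ => (q.1 • e, q.2)) (ContDiff.contDiffOn (by fun_prop)) ?_
    intro q hq
    have hq : 0 < q.1 := hq
    have he0 : e ≠ 0 := by rw [← norm_ne_zero_iff, he]; norm_num
    exact smul_ne_zero hq.ne' he0
  have hG1 : ContDiffOn ℝ 1 G {q : ℝ × ℝ | 0 < q.1} := hG.of_le (by norm_num)
  have hGv : ∀ v, ContDiffOn ℝ 1 (fun q => fderiv ℝ G q v) {q : ℝ × ℝ | 0 < q.1} := fun v =>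
    halfPlane_fderiv (n := 2) (k := 1) hG (by norm_num) v
  have hGvw : ∀ v w, ContinuousOn (fun q => fderiv ℝ (fun q => fderiv ℝ G q v) q w)
      {q : ℝ × ℝ | 0 < q.1} := fun v w =>
    (halfPlane_fderiv (n := 1) (k := 0) (hGv v) (by norm_num) w).continuousOn
  have hu : ∀ x t, x ≠ 0 → S.u x t = G (‖x‖, t) := by
    intro x t _
    show S.u x t = S.u (‖x‖ • e) t
    rw [S.u_eq_rad, S.u_eq_rad (‖x‖ • e), norm_smul, he, norm_norm, mul_one]
  have hpde : ∀ r t, 0 < r → fderiv ℝ (fun q => fderiv ℝ G q (0, 1)) (r, t) (0, 1)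
      = fderiv ℝ (fun q => fderiv ℝ G q (1, 0)) (r, t) (1, 0)
        + ((d:ℝ) - 1) * fderiv ℝ G (r, t) (1, 0) / r - a * G (r, t) / r ^ 2
        - |G (r, t)| ^ (p - 1) * G (r, t) := by
    intro r t hr
    have hx : r • e ≠ 0 := by
      have he0 : e ≠ 0 := by rw [← norm_ne_zero_iff, he]; norm_num
      exact smul_ne_zero hr.ne' he0
    have hnx : ‖r • e‖ = r := by rw [norm_smul, he, mul_one, Real.norm_eq_abs, abs_of_pos hr]
    have h := S.pde (r • e) t hx
    have e1 : deriv (S.u (r • e)) = fun t => fderiv ℝ G (r, t) (0, 1) := by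
      funext τ
      exact (halfPlane_partial_t hG1 hr).deriv
    have e2 : deriv (deriv (S.u (r • e))) t = fderiv ℝ (fun q => fderiv ℝ G q (0, 1)) (r, t) (0, 1) := by
      rw [e1]
      exact (halfPlane_partial_t (hGv (0, 1)) hr).deriv
    have e3 := lap_radial (f := fun y => S.u y t) (φ := fun r => G (r, t))
      (φ' := fun r => fderiv ℝ G (r, t) (1, 0)) (fun y hy => hu y t hy) hx
      (fun ρ hρ => halfPlane_partial_r hG1 hρ)
      (halfPlane_partial_r (t := t) (hGv (1, 0)) (by rw [hnx]; exact hr))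
    rw [e2, e3, hu _ t hx, hnx] at h
    linear_combination h
  refine ⟨⟨fun r t => G (r, t), fun r t => fderiv ℝ G (r, t) (0, 1),
    fun r t => fderiv ℝ G (r, t) (1, 0),
    fun r t => fderiv ℝ (fun q => fderiv ℝ G q (0, 1)) (r, t) (0, 1),
    fun r t => fderiv ℝ (fun q => fderiv ℝ G q (0, 1)) (r, t) (1, 0),
    fun r t => fderiv ℝ (fun q => fderiv ℝ G q (1, 0)) (r, t) (1, 0),
    hG.continuousOn, (hGv _).continuousOn, (hGv _).continuousOn, hGvw _ _, hGvw _ _, hGvw _ _,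
    fun r t hr => halfPlane_partial_t hG1 hr, fun r t hr => halfPlane_partial_r hG1 hr,
    fun r t hr => halfPlane_partial_t (hGv _) hr, fun r t hr => halfPlane_partial_r (hGv _) hr,
    fun r t hr => ?_, fun r t hr => halfPlane_partial_r (hGv _) hr, hpde⟩, ?_⟩
  · have := halfPlane_partial_t (t := t) (hGv (1, 0)) hr
    rwa [halfPlane_symm hG (q := (r, t)) hr] at this
  · intro x t hx
    have hn : 0 < ‖x‖ := norm_pos_iff.2 hx
    refine ⟨hu x t hx, ?_, ?_⟩
    · exact norm_gradient_radial (f := fun y => S.u y t) (φ := fun r => G (r, t))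
        (fun y hy => hu y t hy) hx (halfPlane_partial_r hG1 hn)
    · have : S.u x = fun t => G (‖x‖, t) := funext fun τ => hu x τ hx
      rw [this]
      exact (halfPlane_partial_t hG1 hn).deriv

namespace Profile
variable {D a p : ℝ} (Q : Profile D a p)

/-- The conjugated wave `g = r ^ ν F`, where `ν = (D - 2) / 2`. -/
def wave {ν : ℝ} (hν : D = 2 * ν + 2) : RadialWave (ν ^ 2 + a) (ν * (p - 1)) p where
  g r t := r ^ ν * Q.F r t
  gt r t := r ^ ν * Q.Ft r t
  gr r t := r ^ ν * (Q.Fr r t + ν * Q.F r t / r)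
  gtt r t := r ^ ν * Q.Ftt r t
  gtr r t := r ^ ν * (Q.Ftr r t + ν * Q.Ft r t / r)
  grr r t := r ^ ν * (Q.Frr r t + 2 * ν * Q.Fr r t / r + ν * (ν - 1) * Q.F r t / r ^ 2)
  cg := (continuousOn_fst.rpow_const fun q hq => Or.inl (ne_of_gt hq)).mul Q.cF
  cgt := (continuousOn_fst.rpow_const fun q hq => Or.inl (ne_of_gt hq)).mul Q.cFt
  cgr := (continuousOn_fst.rpow_const fun q hq => Or.inl (ne_of_gt hq)).mul
    (Q.cFr.add ((continuousOn_const.mul Q.cF).div continuousOn_fst fun q hq => ne_of_gt hq))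
  cgtt := (continuousOn_fst.rpow_const fun q hq => Or.inl (ne_of_gt hq)).mul Q.cFtt
  cgtr := (continuousOn_fst.rpow_const fun q hq => Or.inl (ne_of_gt hq)).mul
    (Q.cFtr.add ((continuousOn_const.mul Q.cFt).div continuousOn_fst fun q hq => ne_of_gt hq))
  cgrr := (continuousOn_fst.rpow_const fun q hq => Or.inl (ne_of_gt hq)).mul
    ((Q.cFrr.add ((continuousOn_const.mul Q.cFr).div continuousOn_fst fun q hq => ne_of_gt hq)).add
      ((continuousOn_const.mul Q.cF).div (continuousOn_fst.pow 2)
        fun q hq => pow_ne_zero 2 (ne_of_gt hq)))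
  dg_t r t hr := (Q.dF_t r t hr).const_mul _
  dg_r r t hr := ((hasDerivAt_rpow_const (x := r) (p := ν) (Or.inl hr.ne')).mul
    (Q.dF_r r t hr)).congr_deriv (by rw [rpow_sub_one hr.ne']; field_simp; ring)
  dgt_t r t hr := (Q.dFt_t r t hr).const_mul _
  dgt_r r t hr := ((hasDerivAt_rpow_const (x := r) (p := ν) (Or.inl hr.ne')).mul
    (Q.dFt_r r t hr)).congr_deriv (by rw [rpow_sub_one hr.ne']; field_simp; ring)
  dgr_t r t hr := ((Q.dFr_t r t hr).add (((Q.dF_t r t hr).const_mul ν).div_const r)).const_mul _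
  dgr_r r t hr := ((hasDerivAt_rpow_const (x := r) (p := ν) (Or.inl hr.ne')).mul
    ((Q.dFr_r r t hr).add (((Q.dF_r r t hr).const_mul ν).div (hasDerivAt_id r) hr.ne'))).congr_deriv
      (by
        rw [rpow_sub_one hr.ne']
        simp only [Pi.add_apply, Pi.div_apply, id]
        field_simp
        ring)
  eqn r t hr := by
    have hrν : 0 < r ^ ν := rpow_pos_of_pos hr ν
    have e1 : r ^ (-(ν * (p - 1))) * (|r ^ ν * Q.F r t| ^ (p - 1) * (r ^ ν * Q.F r t))
        = r ^ ν * (|Q.F r t| ^ (p - 1) * Q.F r t) := by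
      rw [abs_mul, abs_of_pos hrν, mul_rpow hrν.le (abs_nonneg _), ← rpow_mul hr.le,
        rpow_neg hr.le]
      have := rpow_pos_of_pos hr (ν * (p - 1))
      field_simp
    have hD : D - 1 = 2 * ν + 1 := by linarith
    rw [e1, Q.eqn r t hr, hD]
    field_simp
    ring

section
variable {ν : ℝ} (hν : D = 2 * ν + 2) {r t : ℝ}

/-- The density, with respect to `dr` and up to the area of the unit sphere, of
`|∇u|² + |u|² / |x|² + |∂_t u|² + |u| ^ (p + 1)`. -/
def J (r t : ℝ) : ℝ :=
  r ^ (D - 1) * (Q.Fr r t ^ 2 + Q.F r t ^ 2 / r ^ 2 + Q.Ft r t ^ 2 + |Q.F r t| ^ (p + 1))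

lemma pow_split (hν : D = 2 * ν + 2) (hr : 0 < r) : r ^ (D - 1) = r * (r ^ ν) ^ 2 := by
  rw [show D - 1 = 1 + ν * (2 : ℕ) by push_cast; linarith, rpow_add hr, rpow_one, rpow_mul hr.le,
    rpow_natCast]

lemma wave_N (hr : 0 < r) :
    (Q.wave hν).N r t = r ^ (D - 1) * |Q.F r t| ^ (p + 1) / (p + 1) := by
  have hrν : 0 < r ^ ν := rpow_pos_of_pos hr ν
  show r ^ (1 - ν * (p - 1)) * |r ^ ν * Q.F r t| ^ (p + 1) / (p + 1) = _
  rw [abs_mul, abs_of_pos hrν, mul_rpow hrν.le (abs_nonneg _), ← rpow_mul hr.le, ← mul_assoc,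
    ← rpow_add hr]
  congr 3
  rw [hν]; ring

/-- The energy density of the conjugated wave differs from that of `u` by `ν g g_r`, the derivative
of `ν g² / 2`. -/
lemma wave_en (hr : 0 < r) : (Q.wave hν).en r t
    = r ^ (D - 1) * (1 / 2 * Q.Fr r t ^ 2 + a / 2 * Q.F r t ^ 2 / r ^ 2 + 1 / 2 * Q.Ft r t ^ 2
        + 1 / (p + 1) * |Q.F r t| ^ (p + 1))
      + ν * ((Q.wave hν).g r t * (Q.wave hν).gr r t) := by
  rw [RadialWave.en, Q.wave_N hν hr, pow_split hν hr]
  simp only [wave]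
  field_simp
  ring

lemma J_nonneg (hr : 0 < r) : 0 ≤ Q.J r t := by
  unfold J
  positivity

/-- Together with `en_le`: the energy density of the conjugated wave is comparable to `J`. -/
lemma J_le (hp : 1 < p) (hm : 0 < ν ^ 2 + a) (hr : 0 < r) :
    Q.J r t ≤ (4 + (p + 1) + 2 * (2 * ν ^ 2 + 1) / (ν ^ 2 + a)) * (Q.wave hν).en r t := by
  have hN := (Q.wave hν).N_nonneg (t := t) hp hr
  have e1 : Q.J r t = r * ((Q.wave hν).gr r t - ν * (Q.wave hν).g r t / r) ^ 2
      + (Q.wave hν).g r t ^ 2 / r + r * (Q.wave hν).gt r t ^ 2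
      + (p + 1) * (Q.wave hν).N r t := by
    rw [Q.wave_N hν hr, J, pow_split hν hr]
    simp only [wave]
    have : p + 1 ≠ 0 := by linarith
    field_simp
    ring
  rw [e1, RadialWave.en]
  generalize (Q.wave hν).gr r t = A at *
  generalize (Q.wave hν).g r t = G at *
  generalize (Q.wave hν).gt r t = T at *
  generalize (Q.wave hν).N r t = N at *
  generalize ν ^ 2 + a = m at *
  have e2 : (4 + (p + 1) + 2 * (2 * ν ^ 2 + 1) / m) * (r * (T ^ 2 + A ^ 2) / 2 + m * G ^ 2 / (2 * r) + N)
      - (r * (A - ν * G / r) ^ 2 + G ^ 2 / r + r * T ^ 2 + (p + 1) * N)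
      = r * (A + ν * G / r) ^ 2 + r * T ^ 2 + (4 + (p + 1)) * (m * G ^ 2 / (2 * r))
        + (p + 1) * (r * (T ^ 2 + A ^ 2) / 2) + 4 * N
        + 2 * (2 * ν ^ 2 + 1) / m * (r * (T ^ 2 + A ^ 2) / 2 + N) := by
    field_simp
    ring
  have : 0 ≤ r * (A + ν * G / r) ^ 2 + r * T ^ 2 + (4 + (p + 1)) * (m * G ^ 2 / (2 * r))
        + (p + 1) * (r * (T ^ 2 + A ^ 2) / 2) + 4 * N
        + 2 * (2 * ν ^ 2 + 1) / m * (r * (T ^ 2 + A ^ 2) / 2 + N) := by positivity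
  linarith

lemma en_le (hp : 1 < p) (hr : 0 < r) :
    (Q.wave hν).en r t ≤ (2 + 2 * ν ^ 2 + |a|) * Q.J r t := by
  have hX : 0 ≤ |Q.F r t| ^ (p + 1) := by positivity
  have hr2 := rpow_pos_of_pos hr (D - 1)
  have e1 : (Q.wave hν).en r t = r ^ (D - 1) * (1 / 2 * (Q.Fr r t + ν * (Q.F r t / r)) ^ 2
      + (ν ^ 2 + a) / 2 * (Q.F r t / r) ^ 2 + 1 / 2 * Q.Ft r t ^ 2
      + 1 / (p + 1) * |Q.F r t| ^ (p + 1)) := by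
    rw [Q.wave_en hν hr, pow_split hν hr]
    simp only [wave]
    field_simp
    ring
  rw [e1, J, ← div_pow, mul_left_comm]
  refine mul_le_mul_of_nonneg_left ?_ hr2.le
  generalize Q.F r t / r = B at *
  generalize |Q.F r t| ^ (p + 1) = X at *
  have h1 : 1 / (p + 1) * X ≤ X := mul_le_of_le_one_left hX (by
    rw [div_le_one (by linarith)]; linarith)
  have h2 : a * B ^ 2 ≤ |a| * B ^ 2 := mul_le_mul_of_nonneg_right (le_abs_self a) (sq_nonneg _)
  have h3 : 0 ≤ |a| * (Q.Fr r t ^ 2 + B ^ 2 + Q.Ft r t ^ 2 + X) := by positivity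
  have h4 : 0 ≤ |a| * (Q.Fr r t ^ 2 + Q.Ft r t ^ 2 + X) := by positivity
  have h5 : 0 ≤ ν ^ 2 * (Q.Fr r t ^ 2 + Q.Ft r t ^ 2 + X) := by positivity
  have h6 := abs_nonneg a
  have h7 : 0 ≤ |a| * B ^ 2 := by positivity
  nlinarith [sq_nonneg (Q.Fr r t - ν * B), sq_nonneg B, sq_nonneg (Q.Ft r t), sq_nonneg (Q.Fr r t)]

end
end Profile

/-! ### Boundary limits and polar coordinates -/

/-- An integrable `h` has arbitrarily large radii where `R |h R|` is small, as `1 / r` is not integrable. -/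
lemma exists_large {h : ℝ → ℝ} (hi : IntegrableOn h (Ioi 0)) (R₀ : ℝ) {δ : ℝ} (hδ : 0 < δ) :
    ∃ R, R₀ ≤ R ∧ 0 < R ∧ R * |h R| < δ := by
  by_contra! H
  refine not_integrableOn_Ioi_inv (a := max R₀ 1) ?_
  have h1 : IntegrableOn (fun r => δ⁻¹ * |h r|) (Ioi (max R₀ 1)) :=
    Integrable.const_mul (IntegrableOn.mono_set (Integrable.abs hi) (Ioi_subset_Ioi (by positivity))) _
  refine h1.mono' measurable_inv.aestronglyMeasurable ?_
  refine (ae_restrict_iff' measurableSet_Ioi).2 (ae_of_all _ fun r hr => ?_)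
  have hr1 : 1 < r := lt_of_le_of_lt (le_max_right _ _) hr
  have hr0 : 0 < r := by linarith
  have := H r ((le_max_left _ _).trans (le_of_lt hr)) hr0
  rw [norm_inv, Real.norm_eq_abs, abs_of_pos hr0, inv_mul_eq_div, le_div_iff₀ hδ,
    inv_mul_le_iff₀ hr0]
  exact this

/-- The analogue of `exists_large` for arbitrarily small radii. -/
lemma exists_small {h : ℝ → ℝ} (hi : IntegrableOn h (Ioi 0)) {ε₀ δ : ℝ} (hε : 0 < ε₀) (hδ : 0 < δ) :
    ∃ ε, 0 < ε ∧ ε ≤ ε₀ ∧ ε * |h ε| < δ := by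
  by_contra! H
  have h2 : ¬ IntervalIntegrable (fun x : ℝ => x⁻¹) volume 0 ε₀ := by
    rw [intervalIntegrable_inv_iff]
    simp [hε.ne, hε.le]
  refine h2 ?_
  rw [intervalIntegrable_iff, uIoc_of_le hε.le]
  have h1 : IntegrableOn (fun r => δ⁻¹ * |h r|) (Ioc 0 ε₀) :=
    Integrable.const_mul (IntegrableOn.mono_set (Integrable.abs hi) Ioc_subset_Ioi_self) _
  refine h1.mono' measurable_inv.aestronglyMeasurable ?_
  refine (ae_restrict_iff' measurableSet_Ioc).2 (ae_of_all _ fun r hr => ?_)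
  have hr0 : 0 < r := hr.1
  have := H r hr0 hr.2
  rw [norm_inv, Real.norm_eq_abs, abs_of_pos hr0, inv_mul_eq_div, le_div_iff₀ hδ,
    inv_mul_le_iff₀ hr0]
  exact this

/-- Integrability of `f / r` makes `f` vanish along sequences tending to `0` and to `∞`, which is enough
for the fundamental theorem of calculus to have no boundary terms. -/
lemma integral_deriv_eq_zero {f f' : ℝ → ℝ} (hf : ∀ r, 0 < r → HasDerivAt f (f' r) r)
    (hi' : IntegrableOn f' (Ioi 0)) (hi : IntegrableOn (fun r => f r / r) (Ioi 0)) :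
    ∫ r in Ioi 0, f' r = 0 := by
  have hpos : ∀ n : ℕ, (0:ℝ) < 1 / (n + 1) := fun n => by positivity
  choose R hR1 hR2 hR3 using fun n : ℕ => exists_large hi n (hpos n)
  choose ε hε1 hε2 hε3 using fun n : ℕ => exists_small hi (hpos n) (hpos n)
  have cancel : ∀ r, 0 < r → r * |f r / r| = |f r| := fun r hr => by
    rw [abs_div, abs_of_pos hr]; field_simp
  have lim := tendsto_one_div_add_atTop_nhds_zero_nat (𝕜 := ℝ)
  have fR : Tendsto (fun n => f (R n)) atTop (nhds 0) :=
    squeeze_zero_norm (fun n => by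
      have := (hR3 n).le
      rwa [cancel _ (hR2 n)] at this) lim
  have fε : Tendsto (fun n => f (ε n)) atTop (nhds 0) :=
    squeeze_zero_norm (fun n => by
      have := (hε3 n).le
      rwa [cancel _ (hε1 n)] at this) lim
  have ii : ∀ b, 0 ≤ b → IntervalIntegrable f' volume 0 b := fun b hb => by
    rw [intervalIntegrable_iff, uIoc_of_le hb]
    exact hi'.mono_set Ioc_subset_Ioi_self
  have IR : Tendsto (fun n => ∫ r in (0:ℝ)..R n, f' r) atTop (nhds (∫ r in Ioi 0, f' r)) :=
    intervalIntegral_tendsto_integral_Ioi 0 hi'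
      (tendsto_atTop_mono hR1 tendsto_natCast_atTop_atTop)
  have Iε : Tendsto (fun n => ∫ r in (0:ℝ)..ε n, f' r) atTop (nhds 0) := by
    have c := intervalIntegral.continuousOn_primitive_interval (f := f') (a := 0) (b := 1)
      (μ := volume) ((intervalIntegrable_iff').1 (ii 1 zero_le_one))
    have c0 := c 0 left_mem_uIcc
    have hε0 : Tendsto ε atTop (nhdsWithin 0 (uIcc 0 1)) := by
      refine tendsto_nhdsWithin_iff.2
        ⟨squeeze_zero (fun n => (hε1 n).le) hε2 lim, Eventually.of_forall fun n => ?_⟩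
      rw [uIcc_of_le zero_le_one]
      refine ⟨(hε1 n).le, (hε2 n).trans ?_⟩
      rw [div_le_one (by positivity)]
      linarith [(Nat.cast_nonneg n : (0:ℝ) ≤ n)]
    have := c0.tendsto.comp hε0
    rw [intervalIntegral.integral_same] at this
    exact this
  have key : ∀ n, (∫ r in (0:ℝ)..R n, f' r) - (∫ r in (0:ℝ)..ε n, f' r) = f (R n) - f (ε n) := by
    intro n
    rw [intervalIntegral.integral_interval_sub_left (ii _ (hR2 n).le) (ii _ (hε1 n).le)]
    refine intervalIntegral.integral_eq_sub_of_hasDerivAt (fun r hr => hf r ?_)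
      ((ii _ (hε1 n).le).symm.trans (ii _ (hR2 n).le))
    exact lt_of_lt_of_le (lt_min (hε1 n) (hR2 n)) hr.1
  have := tendsto_nhds_unique ((IR.sub Iε).congr key) (fR.sub fε)
  simpa using this

section
variable {d : ℕ} {f : EuclideanSpace ℝ (Fin d) → ℝ} {φ : ℝ → ℝ}

/-- The area `d · vol(B₁)` of the unit sphere of `ℝ^d`. -/
def sphereArea (d : ℕ) : ℝ := d * volume.real (ball (0 : EuclideanSpace ℝ (Fin d)) 1)

lemma sphereArea_nonneg (d : ℕ) : 0 ≤ sphereArea d := by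
  unfold sphereArea; positivity

lemma ae_radial (hd : 3 ≤ d) (h : ∀ x, x ≠ 0 → f x = φ ‖x‖) :
    f =ᵐ[volume] fun x => φ ‖x‖ := by
  have : NeZero d := ⟨by omega⟩
  have : ∀ᵐ x : EuclideanSpace ℝ (Fin d), x ≠ 0 := by
    simp [ae_iff]
  filter_upwards [this] with x hx using h x hx

lemma pow_rpow (hd : 3 ≤ d) {r : ℝ} : r ^ (Module.finrank ℝ (EuclideanSpace ℝ (Fin d)) - 1)
    = r ^ ((d:ℝ) - 1) := by
  rw [finrank_euclideanSpace_fin, ← rpow_natCast, Nat.cast_sub (by omega)]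
  simp

lemma integrable_radial (hd : 3 ≤ d) (h : ∀ x, x ≠ 0 → f x = φ ‖x‖) :
    Integrable f ↔ IntegrableOn (fun r => r ^ ((d:ℝ) - 1) * φ r) (Ioi 0) := by
  have : NeZero d := ⟨by omega⟩
  rw [integrable_congr (ae_radial hd h), integrable_fun_norm_addHaar]
  simp only [pow_rpow hd, smul_eq_mul]

lemma integral_radial (hd : 3 ≤ d) (h : ∀ x, x ≠ 0 → f x = φ ‖x‖) :
    ∫ x, f x = sphereArea d * ∫ r in Ioi 0, r ^ ((d:ℝ) - 1) * φ r := by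
  have : NeZero d := ⟨by omega⟩
  rw [integral_congr_ae (ae_radial hd h), integral_fun_norm_addHaar]
  simp only [pow_rpow hd]
  simp only [smul_eq_mul, sphereArea, finrank_euclideanSpace_fin, nsmul_eq_mul, mul_assoc]

lemma integral_ball_radial (hd : 3 ≤ d) (h : ∀ x, x ≠ 0 → f x = φ ‖x‖) {ρ : ℝ} (hρ : 0 ≤ ρ) :
    ∫ x in ball 0 ρ, f x = sphereArea d * ∫ r in (0:ℝ)..ρ, r ^ ((d:ℝ) - 1) * φ r := by
  rw [← integral_indicator measurableSet_ball,
    integral_radial (φ := (Iio ρ).indicator φ) hd (fun x hx => ?_)]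
  · congr 1
    have e1 : ∀ r, r ^ ((d:ℝ) - 1) * (Iio ρ).indicator φ r
        = (Iio ρ).indicator (fun r => r ^ ((d:ℝ) - 1) * φ r) r := fun r => by
      by_cases hr : r ∈ Iio ρ <;> simp [hr]
    simp only [e1]
    rw [setIntegral_indicator measurableSet_Iio, Ioi_inter_Iio,
      intervalIntegral.integral_of_le hρ, integral_Ioc_eq_integral_Ioo]
  · by_cases hr : ‖x‖ < ρ
    · rw [indicator_of_mem (by simpa using hr), indicator_of_mem (mem_Iio.2 hr), h x hx]
    · rw [indicator_of_notMem (by simpa using hr), indicator_of_notMem (by simpa using hr)]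
end

/-! ### The Hardy inequality for the data and conservation of energy -/

namespace Profile
variable {D a p : ℝ} (Q : Profile D a p)

lemma slice {f : ℝ → ℝ → ℝ} (hf : ContinuousOn (fun q : ℝ × ℝ => f q.1 q.2) {q | 0 < q.1}) (t : ℝ) :
    ContinuousOn (fun r => f r t) (Ioi 0) :=
  hf.comp (f := fun r => (r, t)) (by fun_prop) fun r hr => hr

lemma crpow (k : ℝ) : ContinuousOn (fun r : ℝ => r ^ k) (Ioi 0) :=
  continuousOn_id.rpow_const fun _ hr => Or.inl (ne_of_gt hr)

lemma cJ (hp : 1 < p) (t : ℝ) : ContinuousOn (fun r => Q.J r t) (Ioi 0) := by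
  unfold J
  refine (crpow _).mul (((((slice Q.cFr t).pow 2).add (((slice Q.cF t).pow 2).div
    (continuousOn_id.pow 2) fun r hr => pow_ne_zero 2 (ne_of_gt hr))).add
    ((slice Q.cFt t).pow 2)).add ((slice Q.cF t).abs.rpow_const fun _ _ => Or.inr (by linarith)))

/-- A Hardy inequality: the weighted data norm, which has no `|u|² / |x|²` term, controls `∫ r ^ κ J`.
With `k = κ + D - 2 > 0` and `f = r ^ k F²` one has `r ^ κ J ≤ (1 + 4 / k²) K + (2 / k) f'` pointwise,
where `K` is the density of the data norm. The boundary term `f(R')` is at most `1` at suitable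
arbitrarily large radii because the `|F| ^ (p + 1)` part of `K` is integrable; this is where the value
of `κ` enters, through `k ≤ 2 (κ + D) / (p + 1)`. -/
lemma weighted_bound (hp : 1 < p) (hD : 3 ≤ D) {κ : ℝ}
    (hκ : κ = ((D + 2) - (D - 2) * p) / (p + 1)) (hκ0 : 0 < κ)
    (hK : IntegrableOn (fun r => r ^ (D - 1) * ((r ^ κ + 1) *
      (Q.Fr r 0 ^ 2 + Q.Ft r 0 ^ 2 + |Q.F r 0| ^ (p + 1)))) (Ioi 0)) :
    ∃ B, ∀ ε R, 0 < ε → ε ≤ R → ∫ r in ε..R, r ^ κ * Q.J r 0 ≤ B := by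
  set K : ℝ → ℝ := fun r => r ^ (D - 1) * ((r ^ κ + 1) *
      (Q.Fr r 0 ^ 2 + Q.Ft r 0 ^ 2 + |Q.F r 0| ^ (p + 1))) with hKdef
  obtain ⟨k, hk⟩ : ∃ k, k = κ + D - 2 := ⟨_, rfl⟩
  have hk0 : 0 < k := by linarith
  have K_nonneg : ∀ r, 0 < r → 0 ≤ K r := fun r hr => by simp only [hKdef]; positivity
  refine ⟨(1 + 4 / k ^ 2) * (∫ r in Ioi 0, K r) + 2 / k, fun ε R hε hεR => ?_⟩
  obtain ⟨R', hR1, hR0, hR2⟩ := exists_large hK (max R 1) one_pos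
  have hRR : R ≤ R' := (le_max_left _ _).trans hR1
  have h1R : 1 ≤ R' := (le_max_right _ _).trans hR1
  have hεR' : ε ≤ R' := hεR.trans hRR
  -- smallness of the boundary term at `R'`
  have hbd : R' ^ k * Q.F R' 0 ^ 2 ≤ 1 := by
    have hp1 : 0 < p + 1 := by linarith
    have hk2 : k ≤ (κ + D) / (p + 1) * 2 := by
      rw [div_mul_eq_mul_div, le_div_iff₀ hp1]
      have e : κ * (p + 1) = (D + 2) - (D - 2) * p := by rw [hκ]; field_simp
      rw [hk]
      nlinarith
    have h2 : (|Q.F R' 0| * R' ^ ((κ + D) / (p + 1))) ^ (p + 1) ≤ 1 := by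
      rw [mul_rpow (abs_nonneg _) (by positivity), ← rpow_mul hR0.le, div_mul_cancel₀ _ hp1.ne']
      refine le_trans ?_ hR2.le
      rw [abs_of_nonneg (K_nonneg _ hR0)]
      have e : R' ^ (κ + D) = R' * (R' ^ (D - 1) * R' ^ κ) := by
        rw [← rpow_add hR0, ← rpow_one_add' hR0.le (by linarith)]
        congr 1; ring
      rw [e]
      simp only [hKdef]
      have h3 : 0 ≤ R' * R' ^ (D - 1) * (R' ^ κ * (Q.Fr R' 0 ^ 2 + Q.Ft R' 0 ^ 2)
        + (Q.Fr R' 0 ^ 2 + Q.Ft R' 0 ^ 2 + |Q.F R' 0| ^ (p + 1))) := by positivity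
      linarith
    have h4 : |Q.F R' 0| * R' ^ ((κ + D) / (p + 1)) ≤ 1 := by
      by_contra! h
      exact absurd h2 (not_le.2 (one_lt_rpow h hp1))
    have h5 : (|Q.F R' 0| * R' ^ ((κ + D) / (p + 1))) ^ 2 ≤ 1 :=
      pow_le_one₀ (by positivity) h4
    rw [mul_pow, sq_abs, ← rpow_natCast (R' ^ _), ← rpow_mul hR0.le] at h5
    refine le_trans ?_ h5
    rw [mul_comm]
    exact mul_le_mul_of_nonneg_left (rpow_le_rpow_of_exponent_le h1R (by exact_mod_cast hk2))
      (sq_nonneg _)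
  have hsub : ∀ {x y : ℝ}, 0 < x → x ≤ y → uIcc x y ⊆ Ioi 0 := fun hx hxy r hr => by
    rw [uIcc_of_le hxy] at hr
    exact lt_of_lt_of_le hx hr.1
  have cJκ : ContinuousOn (fun r => r ^ κ * Q.J r 0) (Ioi 0) := (crpow κ).mul (Q.cJ hp 0)
  let f' : ℝ → ℝ := fun r => k * r ^ (k - 1) * Q.F r 0 ^ 2
    + r ^ k * (2 * Q.F r 0 * Q.Fr r 0)
  have hf : ∀ r, 0 < r → HasDerivAt (fun r => r ^ k * Q.F r 0 ^ 2) (f' r) r := fun r hr =>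
    ((hasDerivAt_rpow_const (x := r) (p := k) (Or.inl hr.ne')).mul
      ((Q.dF_r r 0 hr).pow 2)).congr_deriv (by simp [f'])
  have cf' : ContinuousOn f' (Ioi 0) :=
    ((continuousOn_const.mul (crpow _)).mul ((slice Q.cF 0).pow 2)).add
      ((crpow _).mul ((continuousOn_const.mul (slice Q.cF 0)).mul (slice Q.cFr 0)))
  have if' : IntervalIntegrable f' volume ε R' := (cf'.mono (hsub hε hεR')).intervalIntegrable
  have iK : IntervalIntegrable K volume ε R' := by
    rw [intervalIntegrable_iff, uIoc_of_le hεR']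
    exact hK.mono_set fun r hr => hε.trans hr.1
  have pw : ∀ r, 0 < r → r ^ κ * Q.J r 0 ≤ (1 + 4 / k ^ 2) * K r + 2 / k * f' r := by
    intro r hr
    have e1 : r ^ (k - 1) = r ^ κ * r ^ (D - 1) / r ^ 2 := by
      rw [← rpow_add hr, ← rpow_natCast r 2, ← rpow_sub hr, hk]
      congr 1; push_cast; ring
    have e2 : r ^ k = r ^ κ * r ^ (D - 1) / r := by
      rw [← rpow_add hr, ← rpow_sub_one hr.ne', hk]
      congr 1; ring
    have hA := rpow_pos_of_pos hr κ
    have hB := rpow_pos_of_pos hr (D - 1)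
    simp only [f', hKdef, J, e1, e2]
    have hX : 0 ≤ |Q.F r 0| ^ (p + 1) := by positivity
    generalize |Q.F r 0| ^ (p + 1) = X at *
    generalize Q.F r 0 = G at *
    generalize Q.Fr r 0 = Y at *
    generalize Q.Ft r 0 = T at *
    generalize r ^ κ = A at *
    generalize r ^ (D - 1) = B at *
    have e3 : (1 + 4 / k ^ 2) * (B * ((A + 1) * (Y ^ 2 + T ^ 2 + X)))
        + 2 / k * (k * (A * B / r ^ 2) * G ^ 2 + A * B / r * (2 * G * Y))
        - A * (B * (Y ^ 2 + G ^ 2 / r ^ 2 + T ^ 2 + X))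
        = A * B * (G / r + 2 * Y / k) ^ 2 + (1 + 4 / k ^ 2) * (B * (Y ^ 2 + T ^ 2 + X))
          + 4 / k ^ 2 * (A * B * (T ^ 2 + X)) := by
      field_simp
      ring
    have : 0 ≤ A * B * (G / r + 2 * Y / k) ^ 2 + (1 + 4 / k ^ 2) * (B * (Y ^ 2 + T ^ 2 + X))
          + 4 / k ^ 2 * (A * B * (T ^ 2 + X)) := by positivity
    linarith
  have s1 : ∫ r in ε..R, r ^ κ * Q.J r 0 ≤ ∫ r in ε..R', r ^ κ * Q.J r 0 := by
    refine intervalIntegral.integral_mono_interval le_rfl hεR hRR ?_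
      (cJκ.mono (hsub hε hεR')).intervalIntegrable
    refine (ae_restrict_iff' measurableSet_Ioc).2 (ae_of_all _ fun r hr => ?_)
    have hr0 : 0 < r := hε.trans hr.1
    exact mul_nonneg (rpow_pos_of_pos hr0 κ).le (Q.J_nonneg hr0)
  have s2 : ∫ r in ε..R', r ^ κ * Q.J r 0
      ≤ ∫ r in ε..R', ((1 + 4 / k ^ 2) * K r + 2 / k * f' r) :=
    intervalIntegral.integral_mono_on hεR' (cJκ.mono (hsub hε hεR')).intervalIntegrable
      ((iK.const_mul _).add (if'.const_mul _)) fun r hr => pw r (lt_of_lt_of_le hε hr.1)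
  rw [intervalIntegral.integral_add (iK.const_mul _) (if'.const_mul _),
    intervalIntegral.integral_const_mul, intervalIntegral.integral_const_mul,
    intervalIntegral.integral_eq_sub_of_hasDerivAt (fun r hr => hf r (hsub hε hεR' hr)) if'] at s2
  have s3 : ∫ r in ε..R', K r ≤ ∫ r in Ioi 0, K r := by
    rw [intervalIntegral.integral_of_le hεR']
    refine setIntegral_mono_set hK ?_ (Eventually.of_forall fun r hr => hε.trans hr.1)
    exact (ae_restrict_iff' measurableSet_Ioi).2 (ae_of_all _ K_nonneg)
  have s4 : 0 ≤ ε ^ k * Q.F ε 0 ^ 2 := by positivity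
  have s5 : 2 / k * (R' ^ k * Q.F R' 0 ^ 2 - ε ^ k * Q.F ε 0 ^ 2) ≤ 2 / k :=
    mul_le_of_le_one_right (by positivity) (by linarith)
  have s6 := mul_le_mul_of_nonneg_left s3 (show 0 ≤ 1 + 4 / k ^ 2 by positivity)
  linarith

end Profile

lemma sphereArea_pos {d : ℕ} (hd : 3 ≤ d) : 0 < sphereArea d := by
  have : 0 < volume.real (ball (0 : EuclideanSpace ℝ (Fin d)) 1) :=
    ENNReal.toReal_pos (measure_ball_pos _ _ one_pos).ne' measure_ball_lt_top.ne
  have : (0:ℝ) < d := by exact_mod_cast (by omega : 0 < d)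
  unfold sphereArea; positivity

section
variable {d : ℕ} {a p : ℝ} (hd : 3 ≤ d) (S : Sol d a p) (Q : Profile (d:ℝ) a p)
  (hQ : ∀ x t, x ≠ 0 → S.u x t = Q.F ‖x‖ t ∧
      ‖gradient (fun y => S.u y t) x‖ = |Q.Fr ‖x‖ t| ∧ deriv (S.u x) t = Q.Ft ‖x‖ t)
include hd hQ

lemma Sol.integrableOn_J (t : ℝ) : IntegrableOn (fun r => Q.J r t) (Ioi 0) := by
  have := (integrable_radial hd (φ := fun r => Q.Fr r t ^ 2 + Q.F r t ^ 2 / r ^ 2 + Q.Ft r t ^ 2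
    + |Q.F r t| ^ (p + 1)) (fun x hx => ?_)).1 (S.finite t)
  · exact this
  · obtain ⟨h1, h2, h3⟩ := hQ x t hx
    simp only [h1, h2, h3, sq_abs]

/-- The conjugated wave has finite conserved energy: its density differs from that of `u` by
`ν g g_r = ∂_r (ν g² / 2)`, which integrates to zero. -/
lemma Sol.finite_energy (hp : 1 < p) {ν : ℝ} (hν : (d:ℝ) = 2 * ν + 2) (hm : 0 < ν ^ 2 + a) :
    (Q.wave hν).FE (S.energy / sphereArea d) := by
  have hien : ∀ t, IntegrableOn (fun r => (Q.wave hν).en r t) (Ioi 0) := by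
    intro t
    refine Integrable.mono' ((S.integrableOn_J hd Q hQ t).const_mul (2 + 2 * ν ^ 2 + |a|))
      ((Profile.slice ((Q.wave hν).cen hp) t).aestronglyMeasurable measurableSet_Ioi) ?_
    refine (ae_restrict_iff' measurableSet_Ioi).2 (ae_of_all _ fun r hr => ?_)
    rw [Real.norm_eq_abs, abs_of_nonneg ((Q.wave hν).en_nonneg hp hm hr)]
    exact Q.en_le hν hp hr
  refine ⟨hien, fun t => ?_⟩
  let W := Q.wave hν
  have cg : ContinuousOn (fun r => W.g r t) (Ioi 0) := Profile.slice W.cg t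
  have cgr : ContinuousOn (fun r => W.gr r t) (Ioi 0) := Profile.slice W.cgr t
  have hX : ∀ r, 0 < r → W.g r t ^ 2 / r ≤ 2 / (ν ^ 2 + a) * W.en r t
      ∧ |W.g r t * W.gr r t| ≤ (1 + 1 / (ν ^ 2 + a)) * W.en r t := by
    intro r hr
    have hN : 0 ≤ W.N r t := W.N_nonneg hp hr
    rw [RadialWave.en]
    generalize W.N r t = N at *
    generalize W.g r t = G at *
    generalize W.gr r t = Y at *
    generalize W.gt r t = T at *
    generalize ν ^ 2 + a = m at hm ⊢
    constructor
    · have e : 2 / m * (r * (T ^ 2 + Y ^ 2) / 2 + m * G ^ 2 / (2 * r) + N) - G ^ 2 / r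
          = 2 / m * (r * (T ^ 2 + Y ^ 2) / 2 + N) := by field_simp; ring
      have : 0 ≤ 2 / m * (r * (T ^ 2 + Y ^ 2) / 2 + N) := by positivity
      linarith
    · have e : (1 + 1 / m) * (r * (T ^ 2 + Y ^ 2) / 2 + m * G ^ 2 / (2 * r) + N)
          - (r * Y ^ 2 + G ^ 2 / r) / 2
          = 1 * (r * T ^ 2 / 2 + m * G ^ 2 / (2 * r) + N)
            + 1 / m * (r * (T ^ 2 + Y ^ 2) / 2 + N) := by field_simp; ring
      have h0 : 0 ≤ 1 * (r * T ^ 2 / 2 + m * G ^ 2 / (2 * r) + N)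
            + 1 / m * (r * (T ^ 2 + Y ^ 2) / 2 + N) := by positivity
      have h1 : (r * Y ^ 2 + G ^ 2 / r) / 2 - G * Y = r / 2 * (Y - G / r) ^ 2 := by
        field_simp; ring
      have h2 : (r * Y ^ 2 + G ^ 2 / r) / 2 + G * Y = r / 2 * (Y + G / r) ^ 2 := by
        field_simp; ring
      have h3 : 0 ≤ r / 2 * (Y - G / r) ^ 2 := by positivity
      have h4 : 0 ≤ r / 2 * (Y + G / r) ^ 2 := by positivity
      rw [abs_le]
      constructor <;> linarith
  have i1 : IntegrableOn (fun r => W.g r t * W.gr r t) (Ioi 0) := by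
    refine Integrable.mono' ((hien t).const_mul (1 + 1 / (ν ^ 2 + a)))
      ((cg.mul cgr).aestronglyMeasurable measurableSet_Ioi) ?_
    exact (ae_restrict_iff' measurableSet_Ioi).2 (ae_of_all _ fun r hr => (hX r hr).2)
  have i2 : IntegrableOn (fun r => (W.g r t ^ 2 / 2) / r) (Ioi 0) := by
    refine Integrable.mono' ((hien t).const_mul (2 / (ν ^ 2 + a)))
      ((((cg.pow 2).div_const 2).div continuousOn_id
        fun r hr => ne_of_gt hr).aestronglyMeasurable measurableSet_Ioi) ?_
    refine (ae_restrict_iff' measurableSet_Ioi).2 (ae_of_all _ fun r hr => ?_)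
    have hr0 : 0 < r := hr
    have h0 : 0 ≤ W.g r t ^ 2 / r := by positivity
    have h1 : (W.g r t ^ 2 / 2) / r = (W.g r t ^ 2 / r) / 2 := by ring
    rw [h1, Real.norm_eq_abs, abs_of_nonneg (by positivity)]
    exact (by linarith : W.g r t ^ 2 / r / 2 ≤ W.g r t ^ 2 / r).trans (hX r hr).1
  have z : ∫ r in Ioi 0, W.g r t * W.gr r t = 0 := by
    refine integral_deriv_eq_zero (f := fun r => W.g r t ^ 2 / 2) (fun r hr => ?_) i1 i2
    exact (((W.dg_r r t hr).pow 2).div_const 2).congr_deriv (by simp; ring)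
  rw [eq_div_iff (sphereArea_pos hd).ne', mul_comm, S.energy_def t,
    integral_radial hd (φ := fun r => 1 / 2 * Q.Fr r t ^ 2 + a / 2 * Q.F r t ^ 2 / r ^ 2
      + 1 / 2 * Q.Ft r t ^ 2 + 1 / (p + 1) * |Q.F r t| ^ (p + 1)) (fun x hx => by
        obtain ⟨h1, h2, h3⟩ := hQ x t hx
        simp only [h1, h2, h3, sq_abs])]
  congr 1
  have e : ∫ r in Ioi 0, r ^ ((d:ℝ) - 1) * (1 / 2 * Q.Fr r t ^ 2 + a / 2 * Q.F r t ^ 2 / r ^ 2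
      + 1 / 2 * Q.Ft r t ^ 2 + 1 / (p + 1) * |Q.F r t| ^ (p + 1))
      = ∫ r in Ioi 0, (W.en r t - ν * (W.g r t * W.gr r t)) := by
    refine setIntegral_congr_fun measurableSet_Ioi fun r hr => ?_
    simp only [W]
    rw [Q.wave_en hν hr]
    ring
  rw [e, integral_sub (hien t) (i1.const_mul ν), integral_const_mul, z]
  simp
end

/-! ### The theorem -/

/-- **Vanishing of interior energy (Proposition 6.3).** With
`κ₀ = ((d+2)−(d−2)p)/(p+1)`, any finite-energy radial classical solution of (NLW_a) whose
data have finite weighted energy `E_{κ₀}` satisfies, for every `c > 0`,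
`∫_{|x| < t − c·t^{1−κ₀}} (|∇u|² + |u|²/|x|² + |∂ₜu|² + |u|^{p+1}) dx → 0` as `t → +∞`. -/
theorem interior_energy_vanishes (d : ℕ) (a p : ℝ) (hd3 : 3 ≤ d) (hd6 : d ≤ 6)
    (hp1 : 1 + 4 / ((d : ℝ) - 1) ≤ p) (hp2 : p < 1 + 4 / ((d : ℝ) - 2))
    (ha : -((d : ℝ) - 2) ^ 2 / 4 + (((d : ℝ) - 2) * p - d) ^ 2 / (4 * p ^ 2) < a)
    (κ₀ : ℝ) (hκ₀ : κ₀ = (((d : ℝ) + 2) - ((d : ℝ) - 2) * p) / (p + 1))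
    (S : Sol d a p)
    (hEκ : Integrable (fun x : EuclideanSpace ℝ (Fin d) =>
      (‖x‖ ^ κ₀ + 1) * (‖gradient (fun y => S.u y 0) x‖ ^ 2
        + (deriv (S.u x) 0) ^ 2 + |S.u x 0| ^ (p + 1))))
    (c : ℝ) (hc : 0 < c) :
    Tendsto (fun t : ℝ =>
        ∫ x in Metric.ball (0 : EuclideanSpace ℝ (Fin d)) (t - c * t ^ (1 - κ₀)),
          (‖gradient (fun y => S.u y t) x‖ ^ 2 + (S.u x t) ^ 2 / ‖x‖ ^ 2
            + (deriv (S.u x) t) ^ 2 + |S.u x t| ^ (p + 1)))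
      atTop (nhds 0) := by
  have hD : (3:ℝ) ≤ d := by exact_mod_cast hd3
  have hD1 : (0:ℝ) < (d:ℝ) - 1 := by linarith
  have hD2 : (0:ℝ) < (d:ℝ) - 2 := by linarith
  have hp : 1 < p := lt_of_lt_of_le (lt_add_of_pos_right 1 (by positivity)) hp1
  have hp0 : 0 < p + 1 := by linarith
  have hp1' : 4 ≤ (p - 1) * ((d:ℝ) - 1) := by
    rw [← div_le_iff₀ hD1]; linarith
  have hp2' : (p - 1) * ((d:ℝ) - 2) < 4 := by
    rw [← lt_div_iff₀ hD2]; linarith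
  have hκ0 : 0 < κ₀ := by
    rw [hκ₀]
    exact div_pos (by linarith) hp0
  have hκ1 : κ₀ < 1 := by
    rw [hκ₀, div_lt_one hp0]
    linarith
  obtain ⟨ν, hν'⟩ : ∃ ν : ℝ, ν = ((d:ℝ) - 2) / 2 := ⟨_, rfl⟩
  have hν : (d:ℝ) = 2 * ν + 2 := by rw [hν']; ring
  have hm : 0 < ν ^ 2 + a := by
    have h0 : 0 ≤ (((d : ℝ) - 2) * p - d) ^ 2 / (4 * p ^ 2) := by positivity
    have h1 : ν ^ 2 = ((d:ℝ) - 2) ^ 2 / 4 := by rw [hν']; ring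
    linarith
  -- This is `(p - 1)(d - 1) / 2 ≥ 2`, the lower bound on `p`.
  have hal : 2 ≤ ν * (p - 1) + (p - 1) / 2 := by
    rw [hν']; linarith
  obtain ⟨Q, hQ⟩ := S.exists_profile hd3
  have FE := S.finite_energy hd3 Q hQ hp hν hm
  have hJ := S.integrableOn_J hd3 Q hQ
  have hK := (integrable_radial hd3 (φ := fun r => (r ^ κ₀ + 1) * (Q.Fr r 0 ^ 2 + Q.Ft r 0 ^ 2
    + |Q.F r 0| ^ (p + 1))) (fun x hx => by
      obtain ⟨h1, h2, h3⟩ := hQ x 0 hx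
      simp only [h1, h2, h3, sq_abs])).1 hEκ
  obtain ⟨B, hB⟩ := Q.weighted_bound hp hD hκ₀ hκ0 hK
  obtain ⟨L, hL⟩ : ∃ L, L = (4 + 1 / (ν ^ 2 + a)) * (2 + 2 * ν ^ 2 + |a|) := ⟨_, rfl⟩
  have hL0 : 0 ≤ L := by rw [hL]; positivity
  have hqB : ∀ ε R, 0 < ε → ε ≤ R →
      ∫ r in ε..R, r ^ κ₀ * (Q.wave hν).q r 0 ≤ L * B := by
    intro ε R hε hεR
    have hsub : uIcc ε R ⊆ Ioi 0 := fun r hr => by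
      rw [uIcc_of_le hεR] at hr
      exact lt_of_lt_of_le hε hr.1
    have i1 : IntervalIntegrable (fun r => r ^ κ₀ * (Q.wave hν).q r 0) volume ε R :=
      (((Profile.crpow κ₀).mul (Profile.slice ((Q.wave hν).cq hp) 0)).mono hsub).intervalIntegrable
    have i2 : IntervalIntegrable (fun r => r ^ κ₀ * Q.J r 0) volume ε R :=
      (((Profile.crpow κ₀).mul (Q.cJ hp 0)).mono hsub).intervalIntegrable
    calc ∫ r in ε..R, r ^ κ₀ * (Q.wave hν).q r 0
        ≤ ∫ r in ε..R, L * (r ^ κ₀ * Q.J r 0) := by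
          refine intervalIntegral.integral_mono_on hεR i1 (i2.const_mul L) fun r hr => ?_
          have hr0 : 0 < r := lt_of_lt_of_le hε hr.1
          have h1 := (Q.wave hν).q_le (t := 0) hp hm hr0
          have h2 := mul_le_mul_of_nonneg_left (Q.en_le (t := 0) hν hp hr0)
            (show 0 ≤ 4 + 1 / (ν ^ 2 + a) by positivity)
          have h3 : (Q.wave hν).q r 0 ≤ L * Q.J r 0 := by
            rw [hL, mul_assoc]; exact h1.trans h2
          have h4 := mul_le_mul_of_nonneg_left h3 (rpow_pos_of_pos hr0 κ₀).le
          linarith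
      _ = L * ∫ r in ε..R, r ^ κ₀ * Q.J r 0 := intervalIntegral.integral_const_mul _ _
      _ ≤ L * B := mul_le_mul_of_nonneg_left (hB ε R hε hεR) hL0
  have decay := FE.P_decay hp hm hal hκ0 hκ1 hqB hc
  obtain ⟨C, hC⟩ : ∃ C, C = 4 + (p + 1) + 2 * (2 * ν ^ 2 + 1) / (ν ^ 2 + a) := ⟨_, rfl⟩
  have hC0 : 0 ≤ C := by rw [hC]; positivity
  -- For negative `ρ` the ball is empty, while `P ρ t` has no sign; the absolute value covers this case.
  have main : ∀ ρ t, ∫ x in Metric.ball (0 : EuclideanSpace ℝ (Fin d)) ρ,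
          (‖gradient (fun y => S.u y t) x‖ ^ 2 + (S.u x t) ^ 2 / ‖x‖ ^ 2
            + (deriv (S.u x) t) ^ 2 + |S.u x t| ^ (p + 1))
        ≤ sphereArea d * C * |(Q.wave hν).P ρ t| := by
    intro ρ t
    have hA := sphereArea_nonneg d
    rcases lt_or_ge ρ 0 with hρ | hρ
    · rw [ball_eq_empty.2 hρ.le, setIntegral_empty]
      positivity
    rw [integral_ball_radial hd3 (φ := fun r => Q.Fr r t ^ 2 + Q.F r t ^ 2 / r ^ 2 + Q.Ft r t ^ 2
      + |Q.F r t| ^ (p + 1)) (fun x hx => by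
        obtain ⟨h1, h2, h3⟩ := hQ x t hx
        simp only [h1, h2, h3, sq_abs]) hρ, mul_assoc]
    refine mul_le_mul_of_nonneg_left ?_ hA
    refine le_trans ?_ (mul_le_mul_of_nonneg_left (le_abs_self _) hC0)
    rw [RadialWave.P, ← intervalIntegral.integral_const_mul]
    refine intervalIntegral.integral_mono_on_of_le_Ioo hρ ?_ ((FE.ii le_rfl hρ t).const_mul C)
      fun r hr => ?_
    · rw [intervalIntegrable_iff, uIoc_of_le hρ]
      exact (hJ t).mono_set Ioc_subset_Ioi_self
    · rw [hC]
      exact Q.J_le hν hp hm hr.1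
  refine squeeze_zero (fun t => integral_nonneg fun x => by positivity) (fun t => main _ t) ?_
  simpa using decay.abs.const_mul (sphereArea d * C)
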